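/- arXiv:2603.10244 — 5 statements merged into one kernel-verified Lean document; each statement's English description precedes it below -/
import Mathlib

section
/- Fix n ≥ 2, j ∈ {2,…,n}, and d ∈ Z_{≥0}^n with ∑_i d_i = C(n,2)+1. With A and B defined as above (word tuples with alphabet constraints w_l ∈ {l,…,n}*, lengths a permutation of {0,…,n−1}, unique deficit letter: in A the deficit letter k lies in [i, j−1] together with the condition |w_i| < |w_j|; in B the deficit letter lies in {j,…,n}), there exists an injection f : A → B. Consequently |A| ≤ |B|. -/
open Finset

/-- The set `A` of pairs `((w_1,…,w_n), i)`: `i ∈ [j−1]` (0-indexed `i < j`),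
alphabet constraints `w_l ∈ {l,…,n}^*`, lengths a permutation of `{0,…,n−1}`,
`|w_i| < |w_j|`, and a deficit letter `k ∈ [i, j−1]` relative to `d`. -/
def Aset (n : ℕ) (j : Fin n) (d : Fin n → ℕ) : Set ((Fin n → List (Fin n)) × Fin n) :=
  {wi | wi.2 < j ∧
    (∀ l : Fin n, ∀ a ∈ wi.1 l, l ≤ a) ∧
    (∃ σ : Equiv.Perm (Fin n), ∀ l, (wi.1 l).length = (σ l : ℕ)) ∧
    (wi.1 wi.2).length < (wi.1 j).length ∧
    (∃ k : Fin n, wi.2 ≤ k ∧ k < j ∧ ∀ l : Fin n,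
      (∑ m, (wi.1 m).count l) + (if l = k then 1 else 0) = d l)}

/-- The set `B` of tuples `(w_1,…,w_n)` with alphabet constraints, lengths a
permutation of `{0,…,n−1}`, and a deficit letter `k ∈ {j,…,n}` relative to `d`. -/
def Bset (n : ℕ) (j : Fin n) (d : Fin n → ℕ) : Set (Fin n → List (Fin n)) :=
  {w | (∀ l : Fin n, ∀ a ∈ w l, l ≤ a) ∧
    (∃ σ : Equiv.Perm (Fin n), ∀ l, (w l).length = (σ l : ℕ)) ∧
    (∃ k : Fin n, j ≤ k ∧ ∀ l : Fin n,
      (∑ m, (w m).count l) + (if l = k then 1 else 0) = d l)}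


/-! ### Algebraic part -/

lemma pow_sub_mem {R : Type*} [CommRing R] (P : Subsemiring R) {u v : R}
    (hu : u ∈ P) (hv : v ∈ P) (h : u - v ∈ P) (k : ℕ) : u ^ k - v ^ k ∈ P := by
  induction k with
  | zero => simp [P.zero_mem]
  | succ k ih =>
    have : u ^ (k+1) - v ^ (k+1) = u * (u ^ k - v ^ k) + (u - v) * v ^ k := by ring
    rw [this]
    exact P.add_mem (P.mul_mem hu ih) (P.mul_mem h (P.pow_mem hv k))

lemma prod_diff_mem {R : Type*} [CommRing R] (P : Subsemiring R) {y z : R}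
    (hy : y ∈ P) (hz : z ∈ P) (h : z - y ∈ P ∨ y - z ∈ P) (k : ℕ) :
    (z ^ k - y ^ k) * (z - y) ∈ P := by
  rcases h with h | h
  · exact P.mul_mem (pow_sub_mem P hz hy h k) h
  · have : (z ^ k - y ^ k) * (z - y) = (y ^ k - z ^ k) * (y - z) := by ring
    rw [this]
    exact P.mul_mem (pow_sub_mem P hy hz h k) h

lemma three_mem {R : Type*} [CommRing R] (P : Subsemiring R) {y z t : R}
    (hy : y ∈ P) (hz : z ∈ P) (ht : t ∈ P) (hzt : z - t ∈ P) (hyt : y - t ∈ P)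
    (h : z - y ∈ P ∨ y - z ∈ P) {a b c : ℕ} (hac : a < c) (hcb : c < b) :
    t ^ (c+1) * (z ^ b * y ^ a + y ^ b * z ^ a)
      - t ^ b * (z ^ c * y ^ (a+1) + y ^ c * z ^ (a+1)) ∈ P := by
  obtain ⟨e, rfl⟩ : ∃ e, b = c + 1 + e := ⟨b - (c+1), by omega⟩
  obtain ⟨f, rfl⟩ : ∃ f, c = a + f := ⟨c - a, by omega⟩
  have e1 : t ^ (a+f+1) * (z ^ (a+f+1+e) * y ^ a + y ^ (a+f+1+e) * z ^ a)
      - t ^ (a+f+1+e) * (z ^ (a+f) * y ^ (a+1) + y ^ (a+f) * z ^ (a+1))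
      = t ^ (a+f+1) * ((z*y)^a * ((z ^ (f+e) - y ^ (f+e)) * (z - y)))
      + t ^ (a+f+1) * (z ^ (a+f) * y ^ (a+1) * (z ^ e - t ^ e)
        + y ^ (a+f) * z ^ (a+1) * (y ^ e - t ^ e)) := by
    ring
  rw [e1]
  have h1 := prod_diff_mem P hy hz h (f+e)
  have h2 := pow_sub_mem P hz ht hzt e
  have h3 := pow_sub_mem P hy ht hyt e
  refine P.add_mem (P.mul_mem (P.pow_mem ht _) (P.mul_mem (P.pow_mem (P.mul_mem hz hy) _) h1))
    (P.mul_mem (P.pow_mem ht _) (P.add_mem ?_ ?_))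
  · exact P.mul_mem (P.mul_mem (P.pow_mem hz _) (P.pow_mem hy _)) h2
  · exact P.mul_mem (P.mul_mem (P.pow_mem hy _) (P.pow_mem hz _)) h3

lemma two_mem {R : Type*} [CommRing R] (P : Subsemiring R) {z t : R}
    (hz : z ∈ P) (ht : t ∈ P) (hzt : z - t ∈ P) {b c : ℕ} (hcb : c < b) :
    t ^ (c+1) * z ^ b - z ^ (c+1) * t ^ b ∈ P := by
  obtain ⟨e, rfl⟩ : ∃ e, b = c + 1 + e := ⟨b - (c+1), by omega⟩
  have e1 : t ^ (c+1) * z ^ (c+1+e) - z ^ (c+1) * t ^ (c+1+e)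
    = (t*z)^(c+1) * (z ^ e - t ^ e) := by ring
  rw [e1]
  exact P.mul_mem (P.pow_mem (P.mul_mem ht hz) _) (pow_sub_mem P hz ht hzt e)

/-- Indices `i < j` with smaller exponent than `j`. -/
def Lset {n : ℕ} (j : Fin n) (σ : Equiv.Perm (Fin n)) : Finset (Fin n) :=
  univ.filter (fun i => i < j ∧ σ i < σ j)

lemma exists_star {n : ℕ} (j : Fin n) (σ : Equiv.Perm (Fin n)) :
    ∃ s : Fin n, (Lset j σ).Nonempty → s ∈ Lset j σ ∧ ∀ i ∈ Lset j σ, σ i ≤ σ s := by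
  by_cases h : (Lset j σ).Nonempty
  · obtain ⟨s, hs, h'⟩ := Finset.exists_max_image (Lset j σ) σ h
    exact ⟨s, fun _ => ⟨hs, h'⟩⟩
  · exact ⟨j, fun h' => absurd h' h⟩

noncomputable def star' {n : ℕ} (j : Fin n) (σ : Equiv.Perm (Fin n)) : Fin n :=
  (exists_star j σ).choose

lemma star_mem {n : ℕ} {j : Fin n} {σ : Equiv.Perm (Fin n)} {i : Fin n} (h : i ∈ Lset j σ) :
    star' j σ ∈ Lset j σ := ((exists_star j σ).choose_spec ⟨i, h⟩).1

lemma star_max {n : ℕ} {j : Fin n} {σ : Equiv.Perm (Fin n)} {i : Fin n} (h : i ∈ Lset j σ) :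
    σ i ≤ σ (star' j σ) := ((exists_star j σ).choose_spec ⟨i, h⟩).2 i h

lemma mem_L {n : ℕ} {j : Fin n} {σ : Equiv.Perm (Fin n)} {i : Fin n} :
    i ∈ Lset j σ ↔ i < j ∧ σ i < σ j := by simp [Lset]

lemma star_eq {n : ℕ} {j : Fin n} {σ : Equiv.Perm (Fin n)} {s : Fin n} (h : s ∈ Lset j σ)
    (hm : ∀ i ∈ Lset j σ, σ i ≤ σ s) : star' j σ = s :=
  σ.injective (le_antisymm (hm _ (star_mem h)) (star_max h))

/-- Swap the value at `j` with the next lower one. -/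
noncomputable def down {n : ℕ} (j : Fin n) (σ : Equiv.Perm (Fin n)) : Equiv.Perm (Fin n) :=
  σ * Equiv.swap j (star' j σ)

lemma L_card {n : ℕ} {j : Fin n} {σ : Equiv.Perm (Fin n)} (h : (Lset j σ).Nonempty) :
    (Lset j σ).card = 1 + (Lset j (down j σ)).card := by
  obtain ⟨i, hi⟩ := h
  have hs := star_mem hi
  have : Lset j (down j σ) = (Lset j σ).erase (star' j σ) := by
    ext l
    have hs' := mem_L.1 hs
    have hl := @star_max n j σ l
    simp only [mem_L, down, Equiv.Perm.mul_apply, Equiv.swap_apply_left, Finset.mem_erase] at hl ⊢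
    by_cases h1 : l = star' j σ
    · subst h1
      simp only [Equiv.swap_apply_right]
      simp only [ne_eq, not_true_eq_false, false_and, iff_false, not_and, not_lt]
      intro _
      exact hs'.2.le
    · by_cases h2 : l = j
      · simp [h2]
      · rw [Equiv.swap_apply_of_ne_of_ne h2 h1]
        constructor
        · rintro ⟨h3, h4⟩
          exact ⟨h1, h3, h4.trans hs'.2⟩
        · rintro ⟨_, h3, h4⟩
          exact ⟨h3, lt_of_le_of_ne (hl ⟨h3, h4⟩) (fun h => h1 (σ.injective h))⟩
  rw [this, ← Finset.card_erase_add_one hs, add_comm]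

lemma down_spec {n : ℕ} {j : Fin n} {σ : Equiv.Perm (Fin n)} (h : (Lset j σ).Nonempty) :
    star' j σ < j ∧ down j σ j < down j σ (star' j σ) ∧
    ∀ l, l < j → down j σ j < down j σ l → down j σ (star' j σ) ≤ down j σ l := by
  obtain ⟨i, hi⟩ := h
  have hs' := mem_L.1 (star_mem hi)
  refine ⟨hs'.1, by simpa [down] using hs'.2, ?_⟩
  intro l hl
  have hm := @star_max n j σ l
  by_cases h1 : l = star' j σ
  · intro _; rw [h1]
  · simp only [mem_L, down, Equiv.Perm.mul_apply, Equiv.swap_apply_left,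
      Equiv.swap_apply_right] at hm ⊢
    rw [Equiv.swap_apply_of_ne_of_ne hl.ne h1]
    intro h
    by_contra h3
    exact absurd (hm ⟨hl, not_le.1 h3⟩) (not_le.2 h)

lemma down_inj {n : ℕ} {j : Fin n} {σ τ : Equiv.Perm (Fin n)} (h : (Lset j σ).Nonempty)
    (h' : (Lset j τ).Nonempty) (e : down j σ = down j τ) : σ = τ := by
  obtain ⟨a1, a2, a3⟩ := down_spec h
  obtain ⟨b1, b2, b3⟩ := down_spec h'
  rw [← e] at b2 b3
  have : star' j σ = star' j τ :=
    (down j σ).injective (le_antisymm (a3 _ b1 b2) (b3 _ a1 a2))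
  unfold down at e
  rw [this] at e
  exact mul_right_cancel e

noncomputable def Mon {R : Type*} [CommRing R] {n : ℕ} (y : Fin n → R)
    (σ : Equiv.Perm (Fin n)) : R := ∏ l, y l ^ (σ l : ℕ)

lemma Mon_mem {R : Type*} [CommRing R] (P : Subsemiring R) {n : ℕ} {y : Fin n → R}
    (hy : ∀ l, y l ∈ P) (σ : Equiv.Perm (Fin n)) : Mon y σ ∈ P :=
  P.prod_mem (fun l _ => P.pow_mem (hy l) _)

lemma first_mem {R : Type*} [CommRing R] (P : Subsemiring R) {n : ℕ} {y : Fin n → R}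
    (hy : ∀ l, y l ∈ P) (j : Fin n) :
    ∑ σ, (1 + ((Lset j σ).card : R)) * (y j * Mon y σ)
      - ∑ σ, ((Lset j σ).card : R) * (y j * Mon y (down j σ)) ∈ P := by
  classical
  set N : Finset (Equiv.Perm (Fin n)) := univ.filter (fun σ => (Lset j σ).Nonempty) with hN
  have e1 : ∑ σ, ((Lset j σ).card : R) * (y j * Mon y (down j σ))
      = ∑ σ ∈ N.image (down j), (1 + ((Lset j σ).card : R)) * (y j * Mon y σ) := by
    rw [Finset.sum_image]
    · rw [hN, Finset.sum_filter]
      refine Finset.sum_congr rfl (fun σ _ => ?_)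
      split_ifs with h
      · rw [L_card h]; push_cast; ring
      · rw [Finset.not_nonempty_iff_eq_empty.1 h]; simp
    · intro σ hσ τ hτ e
      simp only [hN, coe_filter, mem_univ, true_and, Set.mem_ofPred_eq] at hσ hτ
      exact down_inj hσ hτ e
  rw [e1, ← Finset.sum_sdiff (Finset.subset_univ (N.image (down j))), add_sub_cancel_right]
  refine P.sum_mem (fun σ _ => P.mul_mem (P.add_mem P.one_mem (natCast_mem P _)) 
    (P.mul_mem (hy j) (Mon_mem P hy σ)))

noncomputable def Tm {R : Type*} [CommRing R] {n : ℕ} (y : Fin n → R) (j : Fin n)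
    (x : (_ : Equiv.Perm (Fin n)) × Fin n) : R :=
  y j * Mon y (down j x.1) - y x.2 * Mon y x.1

noncomputable def gm {n : ℕ} (j : Fin n)
    (x : (_ : Equiv.Perm (Fin n)) × Fin n) : (_ : Equiv.Perm (Fin n)) × Fin n :=
  ⟨x.1 * Equiv.swap x.2 (star' j x.1), star' j x.1⟩

lemma star_swap {n : ℕ} {j : Fin n} {σ : Equiv.Perm (Fin n)} {i : Fin n} (h : i ∈ Lset j σ) :
    star' j σ ∈ Lset j (σ * Equiv.swap i (star' j σ)) ∧
    star' j (σ * Equiv.swap i (star' j σ)) = i := by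
  have hi := mem_L.1 h
  have hs := mem_L.1 (star_mem h)
  have hj : Equiv.swap i (star' j σ) j = j :=
    Equiv.swap_apply_of_ne_of_ne hi.1.ne' hs.1.ne'
  refine ⟨?_, star_eq ?_ ?_⟩
  · rw [mem_L]; simp only [Equiv.Perm.mul_apply, hj, Equiv.swap_apply_right]; exact ⟨hs.1, hi.2⟩
  · rw [mem_L]; simp only [Equiv.Perm.mul_apply, hj, Equiv.swap_apply_left]; exact ⟨hi.1, hs.2⟩
  · intro l hl
    rw [mem_L] at hl
    simp only [Equiv.Perm.mul_apply, hj, Equiv.swap_apply_left] at hl ⊢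
    apply star_max
    rw [mem_L]
    refine ⟨?_, hl.2⟩
    by_cases h1 : l = i
    · subst h1; simpa using hs.1
    · by_cases h2 : l = star' j σ
      · subst h2; simpa using hi.1
      · rw [Equiv.swap_apply_of_ne_of_ne h1 h2]; exact hl.1

lemma gm_gm {n : ℕ} {j : Fin n} {σ : Equiv.Perm (Fin n)} {i : Fin n} (h : i ∈ Lset j σ) :
    gm j (gm j ⟨σ, i⟩) = ⟨σ, i⟩ := by
  have := (star_swap h).2
  simp only [gm, this]
  rw [Equiv.swap_comm (star' j σ) i, mul_assoc, Equiv.swap_mul_self, mul_one]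

lemma Mon_split {R : Type*} [CommRing R] {n : ℕ} (y : Fin n → R) (σ : Equiv.Perm (Fin n))
    {i k j : Fin n} (hik : i ≠ k) (hij : i ≠ j) (hkj : k ≠ j) :
    Mon y σ = y i ^ (σ i : ℕ) * y k ^ (σ k : ℕ) * y j ^ (σ j : ℕ) *
      ∏ l ∈ univ \ {i, k, j}, y l ^ (σ l : ℕ) := by
  unfold Mon
  rw [← Finset.prod_sdiff (Finset.subset_univ ({i, k, j} : Finset (Fin n))), mul_comm]
  congr 1
  rw [Finset.prod_insert (by simp [hik, hij]), Finset.prod_insert (by simp [hkj]),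
    Finset.prod_singleton, mul_assoc]

lemma Mon_split2 {R : Type*} [CommRing R] {n : ℕ} (y : Fin n → R) (σ : Equiv.Perm (Fin n))
    {k j : Fin n} (hkj : k ≠ j) :
    Mon y σ = y k ^ (σ k : ℕ) * y j ^ (σ j : ℕ) *
      ∏ l ∈ univ \ {k, j}, y l ^ (σ l : ℕ) := by
  unfold Mon
  rw [← Finset.prod_sdiff (Finset.subset_univ ({k, j} : Finset (Fin n))), mul_comm]
  congr 1
  rw [Finset.prod_insert (by simp [hkj]), Finset.prod_singleton]

lemma T_mem {R : Type*} [CommRing R] (P : Subsemiring R) {n : ℕ} {y : Fin n → R}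
    (hy : ∀ l, y l ∈ P) (hsub : ∀ i k, i ≤ k → y i - y k ∈ P) {j : Fin n}
    {σ : Equiv.Perm (Fin n)} {i : Fin n} (h : i ∈ Lset j σ) :
    Tm y j ⟨σ, i⟩ + Tm y j (gm j ⟨σ, i⟩) ∈ P := by
  have hi := mem_L.1 h
  have hs := mem_L.1 (star_mem h)
  have hss := (star_swap h).2
  have hmax := star_max h
  by_cases hE : i = star' j σ
  · have : gm j ⟨σ, i⟩ = ⟨σ, i⟩ := by
      simp only [gm, ← hE]; rw [Equiv.swap_self]; rfl
    rw [this]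
    suffices Tm y j ⟨σ, i⟩ ∈ P from P.add_mem this this
    simp only [Tm, down]
    rw [← hE, Mon_split2 y σ hi.1.ne, Mon_split2 y (σ * _) hi.1.ne]
    have e : ∏ l ∈ univ \ {i, j}, y l ^ ((σ * Equiv.swap j i) l : ℕ)
        = ∏ l ∈ univ \ {i, j}, y l ^ (σ l : ℕ) := by
      refine Finset.prod_congr rfl (fun l hl => ?_)
      simp only [mem_sdiff, mem_univ, true_and, mem_insert, mem_singleton, not_or] at hl
      rw [Equiv.Perm.mul_apply, Equiv.swap_apply_of_ne_of_ne hl.2 hl.1]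
    rw [e]
    simp only [Equiv.Perm.mul_apply, Equiv.swap_apply_left, Equiv.swap_apply_right]
    set Q := ∏ l ∈ univ \ {i, j}, y l ^ (σ l : ℕ) with hQ
    have hQm : Q ∈ P := P.prod_mem (fun l _ => P.pow_mem (hy l) _)
    have := P.mul_mem hQm (two_mem P (hy i) (hy j) (hsub i j hi.1.le)
      (show (σ i : ℕ) < σ j from hi.2))
    convert this using 1
    ring
  · simp only [gm, Tm, down, hss]
    set k := star' j σ with hk
    have hkj : k ≠ j := hs.1.ne
    have hij : i ≠ j := hi.1.ne
    rw [Mon_split y σ hE hij hkj, Mon_split y (σ * Equiv.swap j k) hE hij hkj,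
      Mon_split y (σ * Equiv.swap i k * Equiv.swap j i) hE hij hkj,
      Mon_split y (σ * Equiv.swap i k) hE hij hkj]
    have key : ∀ τ : Equiv.Perm (Fin n), (∀ l, l ≠ i → l ≠ k → l ≠ j → τ l = σ l) →
        ∏ l ∈ univ \ {i, k, j}, y l ^ (τ l : ℕ) = ∏ l ∈ univ \ {i, k, j}, y l ^ (σ l : ℕ) := by
      intro τ hτ
      refine Finset.prod_congr rfl (fun l hl => ?_)
      simp only [mem_sdiff, mem_univ, true_and, mem_insert, mem_singleton, not_or] at hl
      rw [hτ l hl.1 hl.2.1 hl.2.2]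
    rw [key (σ * Equiv.swap j k), key (σ * Equiv.swap i k * Equiv.swap j i),
      key (σ * Equiv.swap i k)]
    rotate_left
    · intro l h1 h2 h3
      simp [Equiv.swap_apply_of_ne_of_ne h1 h2]
    · intro l h1 h2 h3
      simp [Equiv.swap_apply_of_ne_of_ne h3 h1, Equiv.swap_apply_of_ne_of_ne h1 h2]
    · intro l h1 h2 h3
      simp [Equiv.swap_apply_of_ne_of_ne h3 h2]
    simp only [Equiv.Perm.mul_apply, Equiv.swap_apply_left, Equiv.swap_apply_right,
      Equiv.swap_apply_of_ne_of_ne hij hE, Equiv.swap_apply_of_ne_of_ne hkj (Ne.symm hE),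
      Equiv.swap_apply_of_ne_of_ne hij.symm hkj.symm]
    set Q := ∏ l ∈ univ \ {i, k, j}, y l ^ (σ l : ℕ) with hQ
    have hQm : Q ∈ P := P.prod_mem (fun l _ => P.pow_mem (hy l) _)
    have hlt : σ i < σ k := lt_of_le_of_ne hmax (fun h => hE (σ.injective h))
    have := P.mul_mem hQm (three_mem P (hy i) (hy k) (hy j) (hsub k j hs.1.le) (hsub i j hi.1.le)
      ((le_total k i).imp (hsub _ _) (hsub _ _))
      (show (σ i : ℕ) < σ k from hlt) (show (σ k : ℕ) < σ j from hs.2))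
    convert this using 1
    ring

lemma second_mem {R : Type*} [CommRing R] (P : Subsemiring R) 
    (half : ∀ x : R, x + x ∈ P → x ∈ P) {n : ℕ} {y : Fin n → R}
    (hy : ∀ l, y l ∈ P) (hsub : ∀ i k, i ≤ k → y i - y k ∈ P) (j : Fin n) :
    ∑ σ, ∑ i ∈ Lset j σ, (y j * Mon y (down j σ) - y i * Mon y σ) ∈ P := by
  have e0 : ∑ σ, ∑ i ∈ Lset j σ, (y j * Mon y (down j σ) - y i * Mon y σ)
    = ∑ x ∈ univ.sigma (fun σ => Lset j σ), Tm y j x := by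
    rw [Finset.sum_sigma]; rfl
  have hmap : ∀ x ∈ (univ : Finset (Equiv.Perm (Fin n))).sigma (fun σ => Lset j σ),
      gm j x ∈ (univ : Finset (Equiv.Perm (Fin n))).sigma (fun σ => Lset j σ) := by
    rintro ⟨σ, i⟩ hx
    simp only [mem_sigma, mem_univ, true_and] at hx
    simp only [gm, mem_sigma, mem_univ, true_and]
    exact (star_swap hx).1
  have hinv : ∀ x ∈ (univ : Finset (Equiv.Perm (Fin n))).sigma (fun σ => Lset j σ),
      gm j (gm j x) = x := by
    rintro ⟨σ, i⟩ hx
    simp only [mem_sigma, mem_univ, true_and] at hx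
    exact gm_gm hx
  have e1 : ∑ x ∈ univ.sigma (fun σ => Lset j σ), Tm y j (gm j x)
      = ∑ x ∈ univ.sigma (fun σ => Lset j σ), Tm y j x :=
    Finset.sum_nbij' (gm j) (gm j) hmap hmap hinv hinv (fun _ _ => rfl)
  rw [e0]
  apply half
  nth_rewrite 2 [← e1]
  rw [← Finset.sum_add_distrib]
  refine P.sum_mem ?_
  rintro ⟨σ, i⟩ hx
  simp only [mem_sigma, mem_univ, true_and] at hx
  exact T_mem P hy hsub hx

lemma alg_main {R : Type*} [CommRing R] (P : Subsemiring R) 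
    (half : ∀ x : R, x + x ∈ P → x ∈ P) {n : ℕ} {y : Fin n → R}
    (hy : ∀ l, y l ∈ P) (hsub : ∀ i k, i ≤ k → y i - y k ∈ P) (j : Fin n) :
    ∑ σ, y j * Mon y σ - ∑ σ, ∑ i ∈ Lset j σ, (y i - y j) * Mon y σ ∈ P := by
  have := P.add_mem (first_mem P hy j) (second_mem P half hy hsub j)
  convert this using 1
  simp only [← Finset.sum_sub_distrib, ← Finset.sum_add_distrib]
  refine Finset.sum_congr rfl (fun σ _ => ?_)
  simp only [Finset.sum_sub_distrib, sub_mul, Finset.sum_const, nsmul_eq_mul]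
  ring

/-! ### Counting part -/

/-- Words of length `m` over the alphabet `S`. -/
def Wd {α : Type*} [DecidableEq α] (S : Finset α) : ℕ → Finset (List α)
  | 0 => {[]}
  | m+1 => (S ×ˢ Wd S m).image (fun p => p.1 :: p.2)

lemma mem_Wd {α : Type*} [DecidableEq α] {S : Finset α} {m : ℕ} {w : List α} :
    w ∈ Wd S m ↔ w.length = m ∧ ∀ a ∈ w, a ∈ S := by
  induction m generalizing w with
  | zero => simp only [Wd, mem_singleton, List.length_eq_zero_iff]; aesop
  | succ m ih =>
    simp only [Wd, mem_image, mem_product, Prod.exists, ih]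
    constructor
    · rintro ⟨a, v, ⟨h1, h2, h3⟩, rfl⟩
      simp [h1, h2]
      exact h3
    · rintro ⟨h1, h2⟩
      cases w with
      | nil => simp at h1
      | cons a v =>
        refine ⟨a, v, ⟨h2 a (by simp), by simpa using h1, fun b hb => h2 b (by simp [hb])⟩, rfl⟩

lemma sum_Wd {α R : Type*} [DecidableEq α] [CommRing R] (S : Finset α) (f : α → R) (m : ℕ) :
    ∑ w ∈ Wd S m, (w.map f).prod = (∑ a ∈ S, f a) ^ m := by
  induction m with
  | zero => simp [Wd]
  | succ m ih =>
    rw [Wd, Finset.sum_image, Finset.sum_product, pow_succ', ← ih, Finset.sum_mul_sum]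
    · simp
    · rintro ⟨a, v⟩ _ ⟨b, u⟩ _ h
      simpa using h

noncomputable def yv {n : ℕ} (l : Fin n) : MvPolynomial (Fin n) ℤ := ∑ a ∈ Ici l, MvPolynomial.X a

/-- Polynomials with nonnegative coefficients. -/
noncomputable def PosS (n : ℕ) : Subsemiring (MvPolynomial (Fin n) ℤ) where
  carrier := {p | ∀ m, 0 ≤ p.coeff m}
  mul_mem' := by
    intro a b ha hb m
    rw [MvPolynomial.coeff_mul]
    exact Finset.sum_nonneg (fun x _ => mul_nonneg (ha _) (hb _))
  one_mem' := by
    intro m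
    rw [MvPolynomial.coeff_one]
    split_ifs <;> simp
  add_mem' := by
    intro a b ha hb m
    rw [MvPolynomial.coeff_add]
    exact add_nonneg (ha m) (hb m)
  zero_mem' := by intro m; simp

lemma X_mem {n : ℕ} (a : Fin n) : (MvPolynomial.X a : MvPolynomial (Fin n) ℤ) ∈ PosS n := by
  intro m
  classical
  rw [MvPolynomial.coeff_X]
  split_ifs <;> simp

lemma yv_sub {n : ℕ} {i k : Fin n} (h : i ≤ k) :
    yv i - yv k = ∑ a ∈ Ico i k, (MvPolynomial.X a : MvPolynomial (Fin n) ℤ) := by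
  have : Ici i = Ico i k ∪ Ici k := by
    ext a
    simp only [mem_Ici, mem_union, mem_Ico]
    constructor
    · intro h1
      rcases lt_or_ge a k with h2 | h2
      · exact Or.inl ⟨h1, h2⟩
      · exact Or.inr h2
    · rintro (h1 | h1)
      · exact h1.1
      · exact h.trans h1
  unfold yv
  rw [this, Finset.sum_union, add_sub_cancel_right]
  rw [Finset.disjoint_left]
  intro a h1 h2
  simp only [mem_Ico, mem_Ici] at h1 h2
  exact absurd h1.2 (not_lt.2 h2)

/-- The deficit condition. -/
def Def' {n : ℕ} (d : Fin n → ℕ) (k : Fin n) (w : Fin n → List (Fin n)) : Prop :=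
  ∀ l : Fin n, (∑ m, (w m).count l) + (if l = k then 1 else 0) = d l

instance {n : ℕ} (d : Fin n → ℕ) (k : Fin n) : DecidablePred (Def' d k) :=
  fun w => by unfold Def'; infer_instance

def piW {n : ℕ} (σ : Equiv.Perm (Fin n)) : Finset (Fin n → List (Fin n)) :=
  Fintype.piFinset (fun l => Wd (Ici l) (σ l : ℕ))

lemma mem_piW {n : ℕ} {σ : Equiv.Perm (Fin n)} {w : Fin n → List (Fin n)} :
    w ∈ piW σ ↔ (∀ l, (w l).length = (σ l : ℕ)) ∧ ∀ l, ∀ a ∈ w l, l ≤ a := by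
  simp only [piW, Fintype.mem_piFinset, mem_Wd, mem_Ici]
  exact forall_and

lemma list_mon {n : ℕ} (w : List (Fin n)) :
    (w.map (MvPolynomial.X : Fin n → MvPolynomial (Fin n) ℤ)).prod
      = MvPolynomial.monomial (Finsupp.equivFunOnFinite.symm (fun l => w.count l)) 1 := by
  induction w with
  | nil =>
    have : Finsupp.equivFunOnFinite.symm (fun l : Fin n => ([] : List (Fin n)).count l) = 0 := by
      ext l; simp
    rw [this]; simp
  | cons a w ih =>
    rw [List.map_cons, List.prod_cons, ih, MvPolynomial.X, MvPolynomial.monomial_mul]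
    rw [one_mul]
    refine congrArg (fun c => MvPolynomial.monomial c (1 : ℤ)) ?_
    refine Finsupp.ext (fun l => ?_)
    simp [List.count_cons, Finsupp.single_apply, add_comm]

lemma coeff_word {n : ℕ} (d : Fin n → ℕ) (k : Fin n) (w : Fin n → List (Fin n)) :
    MvPolynomial.coeff (Finsupp.equivFunOnFinite.symm d)
      (MvPolynomial.X k * ∏ l, ((w l).map (MvPolynomial.X : Fin n → MvPolynomial (Fin n) ℤ)).prod)
      = if Def' d k w then 1 else 0 := by
  simp only [list_mon]
  rw [← MvPolynomial.monomial_sum_one, MvPolynomial.X, MvPolynomial.monomial_mul,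
    MvPolynomial.coeff_monomial, one_mul]
  refine if_congr ?_ rfl rfl
  rw [Finsupp.ext_iff]
  refine forall_congr' (fun l => ?_)
  simp [Finsupp.single_apply, add_comm, eq_comm]

lemma Mon_yv {n : ℕ} (σ : Equiv.Perm (Fin n)) :
    Mon yv σ = ∑ w ∈ piW σ,
      ∏ l, ((w l).map (MvPolynomial.X : Fin n → MvPolynomial (Fin n) ℤ)).prod := by
  unfold Mon piW yv
  simp only [← sum_Wd]
  rw [Finset.prod_univ_sum]

lemma coeff_sum' {n : ℕ} (d : Fin n → ℕ) (K : Finset (Fin n)) (σ : Equiv.Perm (Fin n)) :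
    MvPolynomial.coeff (Finsupp.equivFunOnFinite.symm d)
      ((∑ a ∈ K, MvPolynomial.X a) * Mon yv σ)
      = ∑ k ∈ K, (((piW σ).filter (Def' d k)).card : ℤ) := by
  rw [Mon_yv, Finset.sum_mul_sum, MvPolynomial.coeff_sum]
  refine Finset.sum_congr rfl (fun k _ => ?_)
  rw [MvPolynomial.coeff_sum]
  simp only [coeff_word]
  simp

lemma count_main {n : ℕ} (j : Fin n) (d : Fin n → ℕ) :
    ∑ σ, ∑ i ∈ Lset j σ, ∑ k ∈ Ico i j, ((piW σ).filter (Def' d k)).card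
      ≤ ∑ σ : Equiv.Perm (Fin n), ∑ k ∈ Ici j, ((piW σ).filter (Def' d k)).card := by
  have hsub : ∀ i k : Fin n, i ≤ k → yv i - yv k ∈ PosS n := by
    intro i k h
    rw [yv_sub h]
    exact (PosS n).sum_mem (fun a _ => X_mem a)
  have h := alg_main (PosS n) (fun x hx m => by
      have := hx m
      rw [MvPolynomial.coeff_add] at this
      omega) (y := yv) (fun l => (PosS n).sum_mem (fun a _ => X_mem a)) hsub j
    (Finsupp.equivFunOnFinite.symm d)
  rw [MvPolynomial.coeff_sub, sub_nonneg] at h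
  simp only [MvPolynomial.coeff_sum] at h
  zify
  refine le_trans (le_of_eq ?_) (h.trans (le_of_eq ?_))
  · refine Finset.sum_congr rfl (fun σ _ => Finset.sum_congr rfl (fun i hi => ?_))
    rw [yv_sub (mem_L.1 hi).1.le, coeff_sum']
  · refine Finset.sum_congr rfl (fun σ _ => ?_)
    rw [yv, coeff_sum']

lemma card_B {n : ℕ} (j : Fin n) (d : Fin n → ℕ) :
    (Bset n j d).Finite ∧
    ∑ σ : Equiv.Perm (Fin n), ∑ k ∈ Ici j, ((piW σ).filter (Def' d k)).card
      = (Bset n j d).ncard := by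
  classical
  set E := ((univ : Finset (Equiv.Perm (Fin n))) ×ˢ Ici j).sigma
    (fun x => (piW x.1).filter (Def' d x.2)) with hE
  have e : Bset n j d = ((E.image (fun x => x.2) : Finset _) : Set _) := by
    ext w
    simp only [Bset, Set.mem_ofPred_eq, coe_image, Set.mem_image, mem_coe, hE, mem_sigma,
      mem_product, mem_univ, true_and, mem_Ici, mem_filter, mem_piW, Sigma.exists, Prod.exists]
    constructor
    · rintro ⟨h1, ⟨σ, h2⟩, k, h3, h4⟩
      exact ⟨σ, k, w, ⟨h3, ⟨h2, h1⟩, h4⟩, rfl⟩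
    · rintro ⟨σ, k, w', ⟨h3, ⟨h2, h1⟩, h4⟩, rfl⟩
      exact ⟨h1, ⟨σ, h2⟩, k, h3, h4⟩
  rw [e]
  refine ⟨Finset.finite_toSet _, ?_⟩
  rw [Set.ncard_coe_finset, Finset.card_image_of_injOn, hE, Finset.card_sigma, Finset.sum_product]
  rintro ⟨⟨σ, k⟩, w⟩ hx ⟨⟨τ, k'⟩, w'⟩ hx' h
  simp only at h
  subst h
  simp only [mem_coe, hE, mem_sigma, mem_product, mem_univ, true_and, mem_filter, mem_piW] at hx hx'
  have h1 : σ = τ := by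
    ext l
    rw [← hx.2.1.1 l, hx'.2.1.1 l]
  have h2 : k = k' := by
    have a := hx.2.2 k
    have b := hx'.2.2 k
    by_contra hne
    simp [hne] at a b
    omega
  subst h1 h2
  rfl

lemma card_A {n : ℕ} (j : Fin n) (d : Fin n → ℕ) :
    (Aset n j d).Finite ∧ (Aset n j d).ncard ≤
    ∑ σ, ∑ i ∈ Lset j σ, ∑ k ∈ Ico i j, ((piW σ).filter (Def' d k)).card := by
  classical
  set E := (univ : Finset (Equiv.Perm (Fin n))).biUnion (fun σ => (Lset j σ).biUnion (fun i =>
    (Ico i j).biUnion (fun k => ((piW σ).filter (Def' d k)).image (fun w => (w, i))))) with hE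
  have e : Aset n j d ⊆ (E : Set _) := by
    rintro ⟨w, i⟩ ⟨h1, h2, ⟨σ, h3⟩, h4, k, h5, h6, h7⟩
    simp only at h1 h2 h3 h4 h5 h6 h7
    simp only [hE, mem_coe, mem_biUnion, mem_univ, true_and, mem_image, mem_filter, mem_L, mem_Ico,
      mem_piW]
    refine ⟨σ, i, ⟨h1, ?_⟩, k, ⟨h5, h6⟩, w, ⟨⟨h3, h2⟩, h7⟩, rfl⟩
    rw [h3, h3] at h4
    exact h4
  refine ⟨(Finset.finite_toSet E).subset e, ?_⟩
  refine (Set.ncard_le_ncard e (Finset.finite_toSet E)).trans ?_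
  rw [Set.ncard_coe_finset]
  refine Finset.card_biUnion_le.trans (Finset.sum_le_sum (fun σ _ => ?_))
  refine Finset.card_biUnion_le.trans (Finset.sum_le_sum (fun i _ => ?_))
  refine Finset.card_biUnion_le.trans (Finset.sum_le_sum (fun k _ => ?_))
  exact Finset.card_image_le

/-- There is an injection `f : A → B`; consequently `|A| ≤ |B|`. -/
theorem stmt10 (n : ℕ) (hn : 2 ≤ n) (j : Fin n) (hj : 1 ≤ (j : ℕ))
    (d : Fin n → ℕ) (hd : ∑ l, d l = n.choose 2 + 1) :
    (∃ f : Aset n j d → Bset n j d, Function.Injective f) ∧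
      Nat.card (Aset n j d) ≤ Nat.card (Bset n j d) := by
  have hB := card_B j d
  have hA := card_A j d
  have hle : Nat.card (Aset n j d) ≤ Nat.card (Bset n j d) := by
    rw [Nat.card_coe_set_eq, Nat.card_coe_set_eq, ← hB.2]
    exact hA.2.trans (count_main j d)
  refine ⟨?_, hle⟩
  have := hA.1.to_subtype
  have := hB.1.to_subtype
  have := Fintype.ofFinite (Aset n j d)
  have := Fintype.ofFinite (Bset n j d)
  rw [Nat.card_eq_fintype_card, Nat.card_eq_fintype_card] at hle
  obtain ⟨f⟩ := Function.Embedding.nonempty_of_card_le hle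
  exact ⟨f, f.injective⟩
end

section
/- Fix n ≥ 2 and j ∈ {2,…,n}. For every degree vector d ∈ Z_{≥0}^n with ∑_i d_i = C(n,2)+1, the coefficient ∑_{π∈S_n} ( ∑_{k=j}^n E^π(d−e_k) − ∑_{k=1}^{j−1} E^π(d−e_k)·∑_{i=1}^k 1[π(i)>π(j)] ) is nonnegative, where E^π(c) denotes the coefficient of x^c in F^π(x) = ∏_{i=1}^n (∑_{h=i}^n x_h)^{n−π(i)} (taken as 0 if some c_i < 0). -/
open Finset

/-- `F^π(x) = ∏_i (∑_{h≥i} x_h)^{n−π(i)}` over ℕ (positions 0-indexed). -/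
noncomputable def Fpoly (n : ℕ) (π : Equiv.Perm (Fin n)) : MvPolynomial (Fin n) ℕ :=
  ∏ i, (∑ h ∈ Finset.Ici i, MvPolynomial.X h) ^ (n - 1 - (π i : ℕ))

/-- `E^π(c)`: coefficient of `x^c` in `F^π`, extended by `0` when some `c_i < 0`. -/
noncomputable def Ecoef (n : ℕ) (π : Equiv.Perm (Fin n)) (c : Fin n → ℤ) : ℕ :=
  if ∀ i, 0 ≤ c i then
    MvPolynomial.coeff (Finsupp.equivFunOnFinite.symm fun i => (c i).toNat) (Fpoly n π)
  else 0


section aux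
variable {R : Type*} [CommRing R] (P : Subsemiring R)

theorem aux_pow_sub {u v : R} (hu : u ∈ P) (hv : v ∈ P) (h : u - v ∈ P) (k : ℕ) :
    u ^ k - v ^ k ∈ P := by
  induction k with
  | zero => simp
  | succ k ih =>
    have : u ^ (k+1) - v ^ (k+1) = u ^ k * (u - v) + (u ^ k - v ^ k) * v := by ring
    rw [this]
    exact P.add_mem (P.mul_mem (P.pow_mem hu _) h) (P.mul_mem ih hv)

theorem aux_two {u w : R} (hu : u ∈ P) (hw : w ∈ P) (h : u - w ∈ P) {t M : ℕ} (htM : t < M) :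
    u ^ M * w ^ t * w - u ^ t * w ^ M * u ∈ P := by
  obtain ⟨k, rfl⟩ := Nat.exists_eq_add_of_lt htM
  have : u ^ (t + k + 1) * w ^ t * w - u ^ t * w ^ (t + k + 1) * u
      = (u ^ (t+1) * w ^ (t+1)) * (u ^ k - w ^ k) := by ring
  rw [this]
  exact P.mul_mem (P.mul_mem (P.pow_mem hu _) (P.pow_mem hw _)) (aux_pow_sub P hu hw h k)

theorem aux_three {u v w : R} (hu : u ∈ P) (hv : v ∈ P) (hw : w ∈ P)
    (huw : u - w ∈ P) (hvw : v - w ∈ P) (huv : u - v ∈ P ∨ v - u ∈ P)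
    {r t M : ℕ} (hrt : r < t) (htM : t < M) :
    (u ^ r * (w ^ t * v ^ M) * w - u ^ r * (w ^ M * v ^ t) * u)
    + (u ^ M * (w ^ t * v ^ r) * w - u ^ t * (w ^ M * v ^ r) * v) ∈ P := by
  obtain ⟨p, rfl⟩ := Nat.exists_eq_add_of_lt hrt
  obtain ⟨k, rfl⟩ := Nat.exists_eq_add_of_lt htM
  have key : (u ^ (p+1+k) - v ^ (p+1+k)) * (u - v) ∈ P := by
    rcases huv with h | h
    · exact P.mul_mem (aux_pow_sub P hu hv h _) h
    · have : (u ^ (p+1+k) - v ^ (p+1+k)) * (u - v)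
        = (v ^ (p+1+k) - u ^ (p+1+k)) * (v - u) := by ring
      rw [this]
      exact P.mul_mem (aux_pow_sub P hv hu h _) h
  have e : (u ^ r * (w ^ (r+p+1) * v ^ (r+p+1+k+1)) * w
        - u ^ r * (w ^ (r+p+1+k+1) * v ^ (r+p+1)) * u)
    + (u ^ (r+p+1+k+1) * (w ^ (r+p+1) * v ^ r) * w
        - u ^ (r+p+1) * (w ^ (r+p+1+k+1) * v ^ r) * v)
    = (w ^ (r+p+1+1) * u ^ r * v ^ r) * ((u ^ (p+1+k) - v ^ (p+1+k)) * (u - v)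
      + (u * v ^ (p+1)) * (v ^ k - w ^ k) + (v * u ^ (p+1)) * (u ^ k - w ^ k)) := by
    ring
  rw [e]
  have hp := fun {x : R} (hx : x ∈ P) (m : ℕ) => P.pow_mem hx m
  exact P.mul_mem (P.mul_mem (P.mul_mem (hp hw _) (hp hu _)) (hp hv _))
    (P.add_mem (P.add_mem key (P.mul_mem (P.mul_mem hu (hp hv _)) (aux_pow_sub P hv hw hvw k)))
      (P.mul_mem (P.mul_mem hv (hp hu _)) (aux_pow_sub P hu hw huw k)))

variable {n : ℕ} (y : Fin n → R)

/-- the monomial `y^a`. -/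
def ymon (a : Equiv.Perm (Fin n)) : R := ∏ l, y l ^ (a l : ℕ)

theorem prod_two (f : Fin n → R) {q j : Fin n} (h : q ≠ j) :
    ∏ l, f l = f q * f j * ∏ l ∈ (univ.erase q).erase j, f l := by
  rw [mul_assoc, Finset.mul_prod_erase _ f (by simp [h.symm]),
    Finset.mul_prod_erase _ f (by simp)]

theorem prod_three (f : Fin n → R) {i j q : Fin n} (h : i ≠ j) (h' : i ≠ q) (h'' : j ≠ q) :
    ∏ l, f l = f i * (f j * f q) * ∏ l ∈ ((univ.erase i).erase j).erase q, f l := by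
  rw [mul_assoc, mul_assoc, Finset.mul_prod_erase _ f (by simp [h''.symm, h'.symm]),
    Finset.mul_prod_erase _ f (by simp [h.symm]), Finset.mul_prod_erase _ f (by simp)]

/-- `a j < a q` and `a q` is the next value after `a j` among positions `< j`. -/
def AA (j q : Fin n) (a : Equiv.Perm (Fin n)) : Prop :=
  a j < a q ∧ ∀ l < j, ¬ (a j < a l ∧ a l < a q)

/-- mirrored version of `AA`. -/
def BB (j q : Fin n) (a : Equiv.Perm (Fin n)) : Prop :=
  a q < a j ∧ ∀ l < j, ¬ (a q < a l ∧ a l < a j)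

theorem BB_swap {j q : Fin n} (hq : q < j) (a : Equiv.Perm (Fin n)) :
    BB j q (a * Equiv.swap j q) ↔ AA j q a := by
  unfold AA BB
  simp only [Equiv.Perm.mul_apply, Equiv.swap_apply_left, Equiv.swap_apply_right]
  refine and_congr_right fun _ => forall₂_congr fun l hl => ?_
  by_cases h : l = q
  · subst h; simp
  · rw [Equiv.swap_apply_of_ne_of_ne hl.ne h]

theorem AA_unique {j q q' : Fin n} (hq : q < j) (hq' : q' < j) {a : Equiv.Perm (Fin n)}
    (h : AA j q a) (h' : AA j q' a) : q = q' := by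
  apply a.injective
  have h1 := h.2 q' hq'
  have h2 := h'.2 q hq
  have h3 := h.1
  have h4 := h'.1
  by_contra hne
  rcases lt_or_gt_of_ne hne with h5 | h5
  · exact h2 ⟨h3, h5⟩
  · exact h1 ⟨h4, h5⟩

theorem BB_unique {j q q' : Fin n} (hq : q < j) (hq' : q' < j) {a : Equiv.Perm (Fin n)}
    (h : BB j q a) (h' : BB j q' a) : q = q' := by
  apply a.injective
  have h1 := h.2 q' hq'
  have h2 := h'.2 q hq
  have h3 := h.1
  have h4 := h'.1
  by_contra hne
  rcases lt_or_gt_of_ne hne with h5 | h5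
  · exact h1 ⟨h5, h4⟩
  · exact h2 ⟨h5, h3⟩

theorem BB_exists {j i : Fin n} (hi : i < j) {a : Equiv.Perm (Fin n)} (h : a i < a j) :
    ∃ q, q < j ∧ BB j q a := by
  obtain ⟨q, hq, hmax⟩ := Finset.exists_max_image ((Iio j).filter fun l => a l < a j) a
    ⟨i, by simp [hi, h]⟩
  simp only [mem_filter, mem_Iio] at hq hmax
  refine ⟨q, hq.1, hq.2, fun l hl hh => ?_⟩
  exact absurd (hmax l ⟨hl, hh.2⟩) (not_le.2 hh.1)

open Classical in
theorem sum_BB (j : Fin n) (g : Equiv.Perm (Fin n) → Fin n → R) :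
    ∑ a : Equiv.Perm (Fin n), ∑ i ∈ (Iio j).filter (fun i => a i < a j), g a i
    = ∑ q ∈ Iio j, ∑ a : Equiv.Perm (Fin n), if BB j q a then
        ∑ i ∈ (Iio j).filter (fun i => a i < a j), g a i else 0 := by
  rw [Finset.sum_comm]
  refine Finset.sum_congr rfl fun a _ => ?_
  by_cases h : ∃ q, q < j ∧ BB j q a
  · obtain ⟨q, hq, hB⟩ := h
    refine Eq.symm ((Finset.sum_eq_single_of_mem q (by simpa using hq) ?_).trans (if_pos hB))
    intro q' hq' hne
    rw [if_neg]
    intro hB'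
    exact hne (BB_unique (by simpa using hq') hq hB' hB)
  · have : (Iio j).filter (fun i => a i < a j) = ∅ := by
      ext i
      simp only [mem_filter, mem_Iio, notMem_empty, iff_false]
      intro hi
      exact h (BB_exists hi.1 hi.2)
    rw [this]
    simp

open Classical in
theorem sum_AA (j : Fin n) (g : Equiv.Perm (Fin n) → R) (hg : ∀ a, g a ∈ P) :
    ∑ a : Equiv.Perm (Fin n), g a
      - ∑ q ∈ Iio j, ∑ a : Equiv.Perm (Fin n), (if AA j q a then g a else 0) ∈ P := by
  rw [Finset.sum_comm, ← Finset.sum_sub_distrib]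
  refine P.sum_mem fun a _ => ?_
  by_cases h : ∃ q, q < j ∧ AA j q a
  · obtain ⟨q, hq, hB⟩ := h
    rw [Finset.sum_eq_single_of_mem q (by simpa using hq), if_pos hB]
    · simp
    intro q' hq' hne
    rw [if_neg]
    intro hB'
    exact hne (AA_unique (by simpa using hq') hq hB' hB)
  · rw [Finset.sum_eq_zero]
    · simpa using hg a
    intro q hq
    rw [if_neg]
    exact fun h' => h ⟨q, by simpa using hq, h'⟩

theorem filter_swap {j q : Fin n} (hq : q < j) {a : Equiv.Perm (Fin n)} (h : AA j q a) :
    (Iio j).filter (fun i => (a * Equiv.swap j q) i < (a * Equiv.swap j q) j)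
    = insert q ((Iio j).filter fun i => a i < a j) := by
  ext i
  simp only [mem_filter, mem_Iio, mem_insert, Equiv.Perm.mul_apply, Equiv.swap_apply_left]
  by_cases hi : i = q
  · subst hi; simp [hq, h.1]
  · simp only [hi, false_or]
    refine and_congr_right fun hij => ?_
    rw [Equiv.swap_apply_of_ne_of_ne hij.ne hi]
    have h1 := h.2 i hij
    have h2 := h.1
    have h3 : a i ≠ a j := fun hh => hij.ne (a.injective hh)
    constructor
    · intro h4
      by_contra h5
      exact h1 ⟨lt_of_le_of_ne (not_lt.1 h5) h3.symm, h4⟩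
    · intro h4
      exact h4.trans h2

theorem AA_swap_iq {i j q : Fin n} (hi : i < j) (hq : q < j) {a : Equiv.Perm (Fin n)}
    (h : AA j q a ∧ a i < a j) :
    AA j i (a * Equiv.swap i q) ∧ (a * Equiv.swap i q) q < (a * Equiv.swap i q) j := by
  obtain ⟨⟨h1, h2⟩, h3⟩ := h
  unfold AA
  simp only [Equiv.Perm.mul_apply, Equiv.swap_apply_left, Equiv.swap_apply_right]
  rw [Equiv.swap_apply_of_ne_of_ne hi.ne' hq.ne']
  refine ⟨⟨h1, fun l hl => ?_⟩, h3⟩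
  by_cases hli : l = i
  · subst hli; simp
  by_cases hlq : l = q
  · subst hlq
    rw [Equiv.swap_apply_right]
    exact fun hh => absurd (hh.1.trans h3) (lt_irrefl _)
  · rw [Equiv.swap_apply_of_ne_of_ne hli hlq]
    exact h2 l hl

theorem AA_swap_iff {i j q : Fin n} (hi : i < j) (hq : q < j) (a : Equiv.Perm (Fin n)) :
    (AA j i (a * Equiv.swap i q) ∧ (a * Equiv.swap i q) q < (a * Equiv.swap i q) j) ↔
    (AA j q a ∧ a i < a j) := by
  refine ⟨fun h => ?_, AA_swap_iq hi hq⟩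
  have := AA_swap_iq hq hi h
  rwa [Equiv.swap_comm q i, mul_assoc, Equiv.swap_mul_self, mul_one] at this

theorem term_two (hy : ∀ i, y i ∈ P) (hyy : ∀ i j, i ≤ j → y i - y j ∈ P) {j q : Fin n}
    (hq : q < j) {a : Equiv.Perm (Fin n)} (h : a j < a q) :
    ymon y a * y j - ymon y (a * Equiv.swap j q) * y q ∈ P := by
  unfold ymon
  rw [prod_two (fun l => y l ^ (a l : ℕ)) hq.ne,
    prod_two (fun l => y l ^ ((a * Equiv.swap j q) l : ℕ)) hq.ne]
  have : ∏ l ∈ (univ.erase q).erase j, y l ^ ((a * Equiv.swap j q) l : ℕ)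
      = ∏ l ∈ (univ.erase q).erase j, y l ^ (a l : ℕ) := by
    refine Finset.prod_congr rfl fun l hl => ?_
    simp only [mem_erase, mem_univ, and_true] at hl
    rw [Equiv.Perm.mul_apply, Equiv.swap_apply_of_ne_of_ne hl.1 hl.2]
  rw [this]
  simp only [Equiv.Perm.mul_apply, Equiv.swap_apply_left, Equiv.swap_apply_right]
  have hr : ∏ l ∈ (univ.erase q).erase j, y l ^ (a l : ℕ) ∈ P :=
    P.prod_mem fun l _ => P.pow_mem (hy l) _
  have := P.mul_mem hr (aux_two P (hy q) (hy j) (hyy q j hq.le) (Fin.lt_def.1 h))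
  convert this using 1
  ring

theorem term_three (hy : ∀ i, y i ∈ P) (hyy : ∀ i j, i ≤ j → y i - y j ∈ P) {i j q : Fin n}
    (hi : i < j) (hq : q < j) {a : Equiv.Perm (Fin n)} (h : a j < a q) (h' : a i < a j) :
    (ymon y a * y j - ymon y (a * Equiv.swap j q) * y i)
    + (ymon y (a * Equiv.swap i q) * y j
      - ymon y (a * Equiv.swap i q * Equiv.swap j i) * y q) ∈ P := by
  have hiq : i ≠ q := by rintro rfl; exact lt_asymm h h'
  have hjq := hq.ne'
  have hij := hi.ne
  have key : ∀ s : Equiv.Perm (Fin n), (∀ l, l ≠ i → l ≠ j → l ≠ q → s l = l) →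
      ymon y (a * s) = y i ^ (a (s i) : ℕ) * (y j ^ (a (s j) : ℕ) * y q ^ (a (s q) : ℕ)) *
        ∏ l ∈ ((univ.erase i).erase j).erase q, y l ^ (a l : ℕ) := by
    intro s hs
    unfold ymon
    rw [prod_three (fun l => y l ^ ((a * s) l : ℕ)) hij hiq hjq]
    simp only [Equiv.Perm.mul_apply]
    congr 1
    refine Finset.prod_congr rfl fun l hl => ?_
    simp only [mem_erase, mem_univ, and_true] at hl
    rw [hs l hl.2.2 hl.2.1 hl.1]
  have k1 := key 1 (by simp)
  have k2 := key (Equiv.swap j q) (fun l _ h2 h3 => Equiv.swap_apply_of_ne_of_ne h2 h3)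
  have k3 := key (Equiv.swap i q) (fun l h1 _ h3 => Equiv.swap_apply_of_ne_of_ne h1 h3)
  have k4 := key (Equiv.swap i q * Equiv.swap j i) (fun l h1 h2 h3 => by
    rw [Equiv.Perm.mul_apply, Equiv.swap_apply_of_ne_of_ne h2 h1,
      Equiv.swap_apply_of_ne_of_ne h1 h3])
  rw [mul_one] at k1
  rw [← mul_assoc] at k4
  rw [k1, k2, k3, k4]
  simp only [Equiv.Perm.mul_apply, Equiv.swap_apply_left, Equiv.swap_apply_right,
    Equiv.Perm.one_apply]
  rw [Equiv.swap_apply_of_ne_of_ne hij hiq, Equiv.swap_apply_of_ne_of_ne hij.symm hjq,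
    Equiv.swap_apply_of_ne_of_ne hjq.symm hiq.symm, Equiv.swap_apply_right]
  have hr : ∏ l ∈ ((univ.erase i).erase j).erase q, y l ^ (a l : ℕ) ∈ P :=
    P.prod_mem fun l _ => P.pow_mem (hy l) _
  have hor : y i - y q ∈ P ∨ y q - y i ∈ P := by
    rcases le_total i q with h | h
    · exact Or.inl (hyy _ _ h)
    · exact Or.inr (hyy _ _ h)
  have := P.mul_mem hr (aux_three P (hy i) (hy q) (hy j) (hyy i j hi.le) (hyy q j hq.le) hor
    (Fin.lt_def.1 h') (Fin.lt_def.1 h))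
  convert this using 1
  ring

open Classical in
theorem sum_three (hy : ∀ i, y i ∈ P) (hyy : ∀ i j, i ≤ j → y i - y j ∈ P)
    (h2 : ∀ x, x + x ∈ P → x ∈ P) (j : Fin n) :
    ∑ q ∈ Iio j, ∑ i ∈ Iio j, ∑ a : Equiv.Perm (Fin n), (if AA j q a ∧ a i < a j then
      (ymon y a * y j - ymon y (a * Equiv.swap j q) * y i) else 0) ∈ P := by
  apply h2
  nth_rewrite 2 [Finset.sum_comm]
  rw [← Finset.sum_add_distrib]
  refine P.sum_mem fun q hq => ?_
  rw [← Finset.sum_add_distrib]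
  refine P.sum_mem fun i hi => ?_
  simp only [mem_Iio] at hi hq
  rw [← Equiv.sum_comp (Equiv.mulRight (Equiv.swap i q))
    (fun a => if AA j i a ∧ a q < a j then
      (ymon y a * y j - ymon y (a * Equiv.swap j i) * y q) else 0),
    ← Finset.sum_add_distrib]
  refine P.sum_mem fun a _ => ?_
  simp only [Equiv.coe_mulRight, AA_swap_iff hi hq]
  split_ifs with h
  · exact term_three P y hy hyy hi hq h.1.1 h.2
  · simp

open Classical in
theorem main_aux (hy : ∀ i, y i ∈ P) (hyy : ∀ i j, i ≤ j → y i - y j ∈ P)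
    (h2 : ∀ x, x + x ∈ P → x ∈ P) (j : Fin n) :
    ∑ a : Equiv.Perm (Fin n), ymon y a *
      (y j + ∑ i ∈ (Iio j).filter (fun i => a i < a j), (y j - y i)) ∈ P := by
  have hm : ∀ a, ymon y a ∈ P := fun a => P.prod_mem fun l _ => P.pow_mem (hy l) _
  have e1 := sum_AA P j (fun a => ymon y a *
      (y j + ∑ i ∈ (Iio j).filter (fun i => a i < a j), y j))
      (fun a => P.mul_mem (hm a) (P.add_mem (hy j) (P.sum_mem fun _ _ => hy j)))
  have e2 := sum_BB j (fun a i => ymon y a * y i)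
  have e3 : ∑ q ∈ Iio j, ∑ a : Equiv.Perm (Fin n), (if BB j q a then
        ∑ i ∈ (Iio j).filter (fun i => a i < a j), ymon y a * y i else 0)
      = ∑ q ∈ Iio j, ∑ a : Equiv.Perm (Fin n), (if AA j q a then
        (ymon y (a * Equiv.swap j q) * y q +
        ∑ i ∈ (Iio j).filter (fun i => a i < a j), ymon y (a * Equiv.swap j q) * y i) else 0) := by
    refine Finset.sum_congr rfl fun q hq => ?_
    rw [mem_Iio] at hq
    rw [← Equiv.sum_comp (Equiv.mulRight (Equiv.swap j q))]
    refine Finset.sum_congr rfl fun a _ => ?_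
    change (if BB j q (a * Equiv.swap j q) then
      ∑ i ∈ (Iio j).filter (fun i => (a * Equiv.swap j q) i < (a * Equiv.swap j q) j),
        ymon y (a * Equiv.swap j q) * y i else 0) = _
    simp only [BB_swap hq]
    split_ifs with h
    · rw [filter_swap hq h, Finset.sum_insert]
      simp only [mem_filter, not_and, not_lt]
      exact fun _ => h.1.le
    · rfl
  have e4 := sum_three P y hy hyy h2 j
  have e5 : ∑ q ∈ Iio j, ∑ a : Equiv.Perm (Fin n), (if AA j q a then
      ymon y a * y j - ymon y (a * Equiv.swap j q) * y q else 0) ∈ P := by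
    refine P.sum_mem fun q hq => P.sum_mem fun a _ => ?_
    rw [mem_Iio] at hq
    split_ifs with h
    · exact term_two P y hy hyy hq h.1
    · exact P.zero_mem
  have e6 : ∑ q ∈ Iio j, ∑ i ∈ Iio j, ∑ a : Equiv.Perm (Fin n), (if AA j q a ∧ a i < a j then
      (ymon y a * y j - ymon y (a * Equiv.swap j q) * y i) else 0)
      = ∑ q ∈ Iio j, ∑ a : Equiv.Perm (Fin n), (if AA j q a then
        ∑ i ∈ (Iio j).filter (fun i => a i < a j),
          (ymon y a * y j - ymon y (a * Equiv.swap j q) * y i) else 0) := by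
    refine Finset.sum_congr rfl fun q hq => ?_
    rw [Finset.sum_comm]
    refine Finset.sum_congr rfl fun a _ => ?_
    split_ifs with h
    · simp only [h, true_and, Finset.sum_filter]
    · simp [h]
  rw [e6] at e4
  have := P.add_mem e1 (P.add_mem e4 e5)
  convert this using 1
  have e7 : ∑ a : Equiv.Perm (Fin n), ymon y a *
      (y j + ∑ i ∈ (Iio j).filter (fun i => a i < a j), (y j - y i))
      = ∑ a : Equiv.Perm (Fin n), ymon y a *
      (y j + ∑ i ∈ (Iio j).filter (fun i => a i < a j), y j)
      - ∑ a : Equiv.Perm (Fin n), ∑ i ∈ (Iio j).filter (fun i => a i < a j), ymon y a * y i := by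
    rw [← Finset.sum_sub_distrib]
    refine Finset.sum_congr rfl fun a _ => ?_
    rw [Finset.sum_sub_distrib, ← Finset.mul_sum]
    ring
  rw [e7, e2, e3, sub_add, sub_right_inj, ← Finset.sum_add_distrib, ← Finset.sum_sub_distrib]
  refine Finset.sum_congr rfl fun q _ => ?_
  rw [← Finset.sum_add_distrib, ← Finset.sum_sub_distrib]
  refine Finset.sum_congr rfl fun a _ => ?_
  split_ifs
  · rw [Finset.sum_sub_distrib, mul_add, Finset.mul_sum]
    ring
  · simp

end aux

/-- polynomials with nonnegative coefficients. -/
def nnPoly (n : ℕ) : Subsemiring (MvPolynomial (Fin n) ℤ) where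
  carrier := {p | ∀ c, 0 ≤ p.coeff c}
  mul_mem' := by
    intro p q hp hq c
    rw [MvPolynomial.coeff_mul]
    exact Finset.sum_nonneg fun x _ => mul_nonneg (hp _) (hq _)
  one_mem' := by
    intro c
    rw [MvPolynomial.coeff_one]
    split_ifs <;> simp
  add_mem' := by
    intro p q hp hq c
    rw [MvPolynomial.coeff_add]
    exact add_nonneg (hp _) (hq _)
  zero_mem' := by
    intro c
    simp

/-- tail sums. -/
noncomputable def yy (n : ℕ) (i : Fin n) : MvPolynomial (Fin n) ℤ :=
  ∑ h ∈ Finset.Ici i, MvPolynomial.X h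

theorem X_mem_s16 (n : ℕ) (i : Fin n) : MvPolynomial.X i ∈ nnPoly n := by
  intro c
  rw [MvPolynomial.coeff_X]
  split_ifs <;> simp

theorem yy_sub (n : ℕ) {i j : Fin n} (h : i ≤ j) :
    yy n i - yy n j = ∑ k ∈ Iio j, if i ≤ k then MvPolynomial.X k else 0 := by
  unfold yy
  rw [← Finset.sum_filter, sub_eq_iff_eq_add, ← Finset.sum_union]
  · refine Finset.sum_congr ?_ fun _ _ => rfl
    ext k
    simp only [mem_Ici, mem_union, mem_filter, mem_Iio]
    constructor
    · intro hk
      rcases lt_or_ge k j with h' | h'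
      · exact Or.inl ⟨h', hk⟩
      · exact Or.inr h'
    · rintro (h' | h')
      · exact h'.2
      · exact h.trans h'
  · rw [Finset.disjoint_left]
    intro k hk hk'
    simp only [mem_Ici, mem_filter, mem_Iio] at hk hk'
    exact absurd hk.1 (not_lt.2 hk')

theorem map_Fpoly (n : ℕ) (π : Equiv.Perm (Fin n)) :
    MvPolynomial.map (Nat.castRingHom ℤ) (Fpoly n π) = ymon (yy n) (π.trans Fin.revPerm) := by
  unfold Fpoly ymon yy
  simp only [map_prod, map_pow, map_sum, MvPolynomial.map_X]
  refine Finset.prod_congr rfl fun i _ => ?_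
  congr 1
  simp only [Equiv.trans_apply, Fin.revPerm_apply, Fin.val_rev]
  omega

theorem Ecoef_eq (n : ℕ) (π : Equiv.Perm (Fin n)) (d : Fin n → ℕ) (k : Fin n) :
    (Ecoef n π (fun l => (d l : ℤ) - if l = k then 1 else 0) : ℤ)
    = MvPolynomial.coeff (Finsupp.equivFunOnFinite.symm d)
      (ymon (yy n) (π.trans Fin.revPerm) * MvPolynomial.X k) := by
  rw [← map_Fpoly, MvPolynomial.coeff_mul_X', MvPolynomial.coeff_map]
  unfold Ecoef
  have hiff : (∀ i, 0 ≤ (d i : ℤ) - if i = k then 1 else 0) ↔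
      k ∈ (Finsupp.equivFunOnFinite.symm d).support := by
    simp only [Finsupp.mem_support_iff, Finsupp.coe_equivFunOnFinite_symm]
    constructor
    · intro h
      have := h k
      simp only [if_true] at this
      omega
    · intro h i
      split_ifs with hi
      · subst hi; omega
      · omega
  simp only [hiff]
  split_ifs
  · simp only [eq_natCast]
    congr 2
    ext l
    simp only [Finsupp.coe_equivFunOnFinite_symm, Finsupp.coe_tsub, Pi.sub_apply,
      Finsupp.single_apply, eq_comm (a := k)]
    split_ifs <;> omega
  · rfl

/-- for every degree vector `d` with `∑ d = C(n,2)+1`, the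
coefficient `∑_π (∑_{k=j}^n E^π(d−e_k) − ∑_{k=1}^{j−1} E^π(d−e_k)·#{i ≤ k : π(i)>π(j)})`
is nonnegative. -/
theorem stmt16 (n : ℕ) (hn : 2 ≤ n) (j : Fin n) (hj : 1 ≤ (j : ℕ))
    (d : Fin n → ℕ) (hd : ∑ l, d l = n.choose 2 + 1) :
    0 ≤ ∑ π : Equiv.Perm (Fin n),
        ((∑ k ∈ Finset.Ici j,
            (Ecoef n π (fun l => (d l : ℤ) - if l = k then 1 else 0) : ℤ)) -
          ∑ k ∈ Finset.Iio j,
            (Ecoef n π (fun l => (d l : ℤ) - if l = k then 1 else 0) : ℤ) *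
              ((Finset.Iic k).filter (fun i => π j < π i)).card) := by
  have hm := main_aux (nnPoly n) (yy n)
    (fun i => (nnPoly n).sum_mem fun k _ => X_mem_s16 n k)
    (fun i j h => by
      rw [yy_sub n h]
      refine (nnPoly n).sum_mem fun k _ => ?_
      split_ifs
      · exact X_mem_s16 n k
      · exact (nnPoly n).zero_mem)
    (fun x hx c => by
      have := hx c
      rw [MvPolynomial.coeff_add] at this
      omega) j
  have hm' := hm (Finsupp.equivFunOnFinite.symm d)
  rw [← Equiv.sum_comp (Equiv.mulLeft (Fin.revPerm : Equiv.Perm (Fin n))),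
    MvPolynomial.coeff_sum] at hm'
  refine hm'.trans_eq (Finset.sum_congr rfl fun π _ => ?_)
  simp only [Ecoef_eq]
  have hπ : (Equiv.mulLeft (Fin.revPerm : Equiv.Perm (Fin n))) π = π.trans Fin.revPerm := rfl
  rw [hπ]
  have hS : ∑ i ∈ (Iio j).filter
        (fun i => (π.trans Fin.revPerm) i < (π.trans Fin.revPerm) j), (yy n j - yy n i)
      = - ∑ k ∈ Iio j, MvPolynomial.X k *
        MvPolynomial.C (((Finset.Iic k).filter (fun i => π j < π i)).card : ℤ) := by
    simp only [Equiv.trans_apply, Fin.revPerm_apply, Fin.rev_lt_rev]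
    rw [← neg_inj, neg_neg, ← Finset.sum_neg_distrib]
    simp only [neg_sub]
    have : ∀ i ∈ (Iio j).filter (fun i => π j < π i), yy n i - yy n j
        = ∑ k ∈ Iio j, if i ≤ k then MvPolynomial.X k else 0 := fun i hi =>
      yy_sub n (by simp only [mem_filter, mem_Iio] at hi; exact hi.1.le)
    rw [Finset.sum_congr rfl this, Finset.sum_comm]
    refine Finset.sum_congr rfl fun k hk => ?_
    rw [mem_Iio] at hk
    rw [← Finset.sum_filter, Finset.sum_const, nsmul_eq_mul, mul_comm]
    congr 1
    rw [map_natCast]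
    congr 2
    ext i
    simp only [mem_filter, mem_Iio, mem_Iic]
    constructor
    · exact fun h => ⟨h.2, h.1.2⟩
    · exact fun h => ⟨⟨h.1.trans_lt hk, h.2⟩, h.1⟩
  rw [hS, ← sub_eq_add_neg, mul_sub, MvPolynomial.coeff_sub, yy, Finset.mul_sum, Finset.mul_sum,
    MvPolynomial.coeff_sum, MvPolynomial.coeff_sum]
  congr 1
  refine Finset.sum_congr rfl fun k _ => ?_
  rw [← mul_assoc, mul_comm _ (MvPolynomial.C _), MvPolynomial.coeff_C_mul, mul_comm]
end

section
/- Fix n ≥ 2 and j ∈ {2,…,n}. The polynomial P(x_1,…,x_n) := ∑_{π∈S_n} ( ∑_{k=j}^n x_k − ∑_{k=1}^{j−1} x_k · ∑_{i=1}^k 1[π(i)>π(j)] ) · ∏_{l=1}^n (∑_{h=l}^n x_h)^{n−π(l)} has all coefficients nonnegative; in particular P(x) ≥ 0 for all x ∈ R_{≥0}^n. -/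
open Finset

/-- The polynomial `P(x) = ∑_π (∑_{k=j}^n x_k − ∑_{k=1}^{j−1} x_k·#{i≤k : π(i)>π(j)})
· ∏_l (∑_{h≥l} x_h)^{n−π(l)}` (positions 0-indexed). -/
noncomputable def Ppoly (n : ℕ) (j : Fin n) : MvPolynomial (Fin n) ℝ :=
  ∑ π : Equiv.Perm (Fin n),
    ((∑ k ∈ Finset.Ici j, MvPolynomial.X k) -
      ∑ k ∈ Finset.Iio j,
        ((((Finset.Iic k).filter (fun i => π j < π i)).card : MvPolynomial (Fin n) ℝ) *
          MvPolynomial.X k)) *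
    ∏ l, (∑ h ∈ Finset.Ici l, MvPolynomial.X h) ^ (n - 1 - (π l : ℕ))

namespace Stmt17Aux

section Abstract
variable {R : Type*} [CommRing R] {n : ℕ}

/-- The monomial `∏ y_l ^ σ(l)`. -/
def mon (y : Fin n → R) (σ : Equiv.Perm (Fin n)) : R := ∏ l, y l ^ (σ l : ℕ)

/-- The positions before `j` with exponent smaller than that of `j`. -/
def low (j : Fin n) (σ : Equiv.Perm (Fin n)) : Finset (Fin n) :=
  (Finset.Iio j).filter (fun i => σ i < σ j)

/-- `m` is the position in `low j σ` of largest exponent. -/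
def IsPred (j : Fin n) (σ : Equiv.Perm (Fin n)) (m : Fin n) : Prop :=
  m < j ∧ σ m < σ j ∧ ∀ i, i < j → σ i < σ j → σ i ≤ σ m

/-- `m` is the position before `j`, above `j` in exponent, of smallest exponent. -/
def IsSucc (j : Fin n) (σ : Equiv.Perm (Fin n)) (m : Fin n) : Prop :=
  m < j ∧ σ j < σ m ∧ ∀ i, i < j → σ j < σ i → σ m ≤ σ i

lemma mon_two (y : Fin n → R) (σ : Equiv.Perm (Fin n)) {p q : Fin n} (h : p ≠ q) :
    mon y σ = y p ^ (σ p : ℕ) * y q ^ (σ q : ℕ) *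
      ∏ l ∈ (univ.erase p).erase q, y l ^ (σ l : ℕ) := by
  unfold mon
  rw [← Finset.mul_prod_erase univ _ (mem_univ p),
    ← Finset.mul_prod_erase (univ.erase p) _ (mem_erase.2 ⟨h.symm, mem_univ q⟩), mul_assoc]

lemma mon_two_swap (y : Fin n → R) (σ : Equiv.Perm (Fin n)) {p q : Fin n} (h : p ≠ q) :
    mon y (σ * Equiv.swap p q) = y p ^ (σ q : ℕ) * y q ^ (σ p : ℕ) *
      ∏ l ∈ (univ.erase p).erase q, y l ^ (σ l : ℕ) := by
  rw [mon_two y _ h]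
  congr 1
  · simp
  · apply Finset.prod_congr rfl
    intro l hl
    simp only [mem_erase, mem_univ, and_true] at hl
    simp [Equiv.swap_apply_of_ne_of_ne hl.2 hl.1]

/-- the product over the positions other than `p, q, r`. -/
def rest (y : Fin n → R) (σ : Equiv.Perm (Fin n)) (p q r : Fin n) : R :=
  ∏ l ∈ ((univ.erase p).erase q).erase r, y l ^ (σ l : ℕ)

lemma mon_three (y : Fin n → R) (σ τ : Equiv.Perm (Fin n)) {p q r : Fin n} (h : p ≠ q)
    (h1 : p ≠ r) (h2 : q ≠ r) (hτ : ∀ l, l ≠ p → l ≠ q → l ≠ r → τ l = σ l) :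
    mon y τ = y p ^ (τ p : ℕ) * y q ^ (τ q : ℕ) * y r ^ (τ r : ℕ) * rest y σ p q r := by
  rw [mon_two y τ h, ← Finset.mul_prod_erase ((univ.erase p).erase q) _ (a := r)
    (by simp [h1.symm, h2.symm]), rest, ← mul_assoc]
  congr 1
  apply Finset.prod_congr rfl
  intro l hl
  simp only [mem_erase, mem_univ, and_true] at hl
  rw [hτ l hl.2.2 hl.2.1 hl.1]

variable (S : Subsemiring R)

lemma sub_pow_mem {u z : R} (hu : u ∈ S) (hz : z ∈ S) (h : u - z ∈ S) (d : ℕ) :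
    u ^ d - z ^ d ∈ S := by
  rw [← Commute.geom_sum₂_mul (Commute.all u z)]
  exact S.mul_mem (S.sum_mem fun i _ => S.mul_mem (S.pow_mem hu _) (S.pow_mem hz _)) h

lemma sub_mul_sub_pow_mem {u v : R} (hu : u ∈ S) (hv : v ∈ S) (h : u - v ∈ S ∨ v - u ∈ S)
    (d : ℕ) : (u - v) * (u ^ d - v ^ d) ∈ S := by
  rcases h with h | h
  · exact S.mul_mem h (sub_pow_mem S hu hv h d)
  · have := S.mul_mem h (sub_pow_mem S hv hu h d)
    convert this using 1
    ring

lemma key_one {u z r : R} (hu : u ∈ S) (hz : z ∈ S) (hr : r ∈ S) (h : u - z ∈ S)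
    {a b : ℕ} (hab : a < b) :
    z * (u ^ b * z ^ a * r) - u * (u ^ a * z ^ b * r) ∈ S := by
  obtain ⟨d, rfl⟩ := Nat.exists_eq_add_of_lt hab
  have := S.mul_mem (S.mul_mem (S.pow_mem (S.mul_mem hu hz) (a + 1))
    (sub_pow_mem S hu hz h d)) hr
  convert this using 1
  ring

lemma key_two {u v z r : R} (hu : u ∈ S) (hv : v ∈ S) (hz : z ∈ S) (hr : r ∈ S)
    (huz : u - z ∈ S) (hvz : v - z ∈ S) (h : u - v ∈ S ∨ v - u ∈ S)
    {a b c : ℕ} (hca : c < a) (hab : a < b) :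
    (z * (u ^ b * v ^ c * z ^ a * r) - v * (u ^ a * v ^ c * z ^ b * r)) +
    (z * (u ^ c * v ^ b * z ^ a * r) - u * (u ^ c * v ^ a * z ^ b * r)) ∈ S := by
  obtain ⟨e, rfl⟩ := Nat.exists_eq_add_of_lt hca
  obtain ⟨d, rfl⟩ := Nat.exists_eq_add_of_lt hab
  have h1 := S.mul_mem (S.pow_mem (S.mul_mem hu hv) c)
    (sub_mul_sub_pow_mem S hu hv h (e + 1 + d))
  have h2 := S.mul_mem (S.mul_mem (S.pow_mem hv (c + 1)) (S.pow_mem hu (c + e + 1)))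
    (sub_pow_mem S hu hz huz d)
  have h3 := S.mul_mem (S.mul_mem (S.pow_mem hu (c + 1)) (S.pow_mem hv (c + e + 1)))
    (sub_pow_mem S hv hz hvz d)
  have := S.mul_mem (S.mul_mem (S.pow_mem hz (c + e + 1 + 1)) (S.add_mem (S.add_mem h1 h2) h3)) hr
  convert this using 1
  ring

/-- The basic difference. -/
def g (y : Fin n → R) (j : Fin n) (σ : Equiv.Perm (Fin n)) (m i : Fin n) : R :=
  y j * mon y (σ * Equiv.swap m j) - y i * mon y σ

variable {S} {y : Fin n → R}

lemma mon_mem (hy : ∀ i, y i ∈ S) (σ : Equiv.Perm (Fin n)) : mon y σ ∈ S :=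
  S.prod_mem fun _ _ => S.pow_mem (hy _) _

lemma rest_mem (hy : ∀ i, y i ∈ S) (σ : Equiv.Perm (Fin n)) (p q r : Fin n) : rest y σ p q r ∈ S :=
  S.prod_mem fun _ _ => S.pow_mem (hy _) _

lemma g_diag (hy : ∀ i, y i ∈ S)
    (hyd : ∀ i k, i ≤ k → y i - y k ∈ S) (j : Fin n) (σ : Equiv.Perm (Fin n)) (m : Fin n) (h : IsPred j σ m) :
    g y j σ m m ∈ S := by
  have hmj : m ≠ j := h.1.ne
  unfold g
  rw [mon_two_swap y σ hmj, mon_two y σ hmj]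
  exact key_one S (hy m) (hy j) (S.prod_mem fun _ _ => S.pow_mem (hy _) _) (hyd m j h.1.le) h.2.1

lemma g_pair (hy : ∀ i, y i ∈ S)
    (hyd : ∀ i k, i ≤ k → y i - y k ∈ S) (j : Fin n) (σ : Equiv.Perm (Fin n)) (m i : Fin n) (him : i ≠ m) (hi : i < j)
    (hσi : σ i < σ j) (h : IsPred j σ m) :
    g y j σ m i + g y j (σ * Equiv.swap m i) i m ∈ S := by
  have hmj : m ≠ j := h.1.ne
  have hij : i ≠ j := hi.ne
  have hlt : σ i < σ m := lt_of_le_of_ne (h.2.2 i hi hσi) (fun e => him (σ.injective e))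
  unfold g
  have hs : ∀ l, l ≠ m → l ≠ i → l ≠ j → (σ * Equiv.swap m i) l = σ l := by
    intro l h1 h2 h3
    simp [Equiv.swap_apply_of_ne_of_ne h1 h2]
  rw [mon_three y σ (σ * Equiv.swap m j) him.symm hmj hij, mon_three y σ σ him.symm hmj hij,
    mon_three y σ (σ * Equiv.swap m i * Equiv.swap i j) him.symm hmj hij,
    mon_three y σ (σ * Equiv.swap m i) him.symm hmj hij hs]
  · have := key_two S (hy m) (hy i) (hy j) (rest_mem hy σ m i j) (hyd m j h.1.le)
      (hyd i j hi.le) ((le_total m i).imp (hyd m i) (hyd i m)) (a := σ m) (b := σ j) (c := σ i)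
      hlt h.2.1
    simpa [Equiv.swap_apply_of_ne_of_ne him hij, Equiv.swap_apply_of_ne_of_ne him.symm hmj,
      Equiv.swap_apply_of_ne_of_ne hmj.symm hij.symm] using this
  · intro l h1 h2 h3
    simp [Equiv.swap_apply_of_ne_of_ne h1 h2, Equiv.swap_apply_of_ne_of_ne h2 h3]
  · intro l h1 h2 h3
    rfl
  · intro l h1 h2 h3
    simp [Equiv.swap_apply_of_ne_of_ne h1 h3]

lemma isSucc_swap (j m : Fin n) (σ : Equiv.Perm (Fin n)) :
    IsSucc j (σ * Equiv.swap m j) m ↔ IsPred j σ m := by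
  by_cases hmj : m < j
  swap
  · simp [IsSucc, IsPred, hmj]
  have hne : ∀ i, i < j → i ≠ m → Equiv.swap m j i = i := fun i hi h =>
    Equiv.swap_apply_of_ne_of_ne h hi.ne
  simp only [IsSucc, IsPred, hmj, true_and, Equiv.Perm.mul_apply, Equiv.swap_apply_left,
    Equiv.swap_apply_right]
  constructor
  · rintro ⟨h1, h2⟩
    refine ⟨h1, fun i hi hσ => ?_⟩
    by_contra hc
    push Not at hc
    have him : i ≠ m := by rintro rfl; exact lt_irrefl _ hc
    have := h2 i hi (by rw [hne i hi him]; exact hc)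
    rw [hne i hi him] at this
    exact absurd hσ (not_lt.2 this)
  · rintro ⟨h1, h2⟩
    refine ⟨h1, fun i hi hσ => ?_⟩
    by_cases him : i = m
    · subst him; simp
    · rw [hne i hi him] at hσ ⊢
      by_contra hc
      push Not at hc
      exact absurd hσ (not_lt.2 (h2 i hi hc))

lemma low_swap (j m : Fin n) (σ : Equiv.Perm (Fin n)) (h : IsPred j σ m) :
    (low j (σ * Equiv.swap m j)).card + 1 = (low j σ).card := by
  have hm : m ∈ low j σ := by simp [low, h.1, h.2.1]
  have : low j (σ * Equiv.swap m j) = (low j σ).erase m := by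
    ext i
    simp only [low, mem_filter, mem_Iio, mem_erase, Equiv.Perm.mul_apply, Equiv.swap_apply_right]
    by_cases him : i = m
    · subst him
      simp [h.2.1.le]
    · simp only [him, ne_eq, not_false_eq_true, true_and]
      refine and_congr_right fun hi => ?_
      rw [Equiv.swap_apply_of_ne_of_ne him hi.ne]
      refine ⟨fun h' => h'.trans h.2.1, fun h' => lt_of_le_of_ne (h.2.2 i hi h') ?_⟩
      exact fun e => him (σ.injective e)
  rw [this, Finset.card_erase_add_one hm]

open Classical in
lemma sum_pred (j : Fin n) (σ : Equiv.Perm (Fin n)) (f : Fin n → R) :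
    ∑ i ∈ low j σ, f i = ∑ m, if IsPred j σ m then ∑ i ∈ low j σ, f i else 0 := by
  by_cases hne : (low j σ).Nonempty
  · obtain ⟨m, hm, hmax⟩ := Finset.exists_max_image (low j σ) σ hne
    simp only [low, mem_filter, mem_Iio] at hm hmax
    have hp : IsPred j σ m := ⟨hm.1, hm.2, fun i h1 h2 => hmax i ⟨h1, h2⟩⟩
    symm
    rw [Finset.sum_eq_single m]
    · simp [hp]
    · intro b _ hb
      rw [if_neg]
      intro hpb
      exact hb (σ.injective (le_antisymm (hp.2.2 b hpb.1 hpb.2.1) (hpb.2.2 m hp.1 hp.2.1)))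
    · simp
  · rw [not_nonempty_iff_eq_empty] at hne
    simp [hne]

open Classical in
lemma succ_mem (j : Fin n) (σ : Equiv.Perm (Fin n)) (f : R) (hf : f ∈ S) :
    f - (∑ m, if IsSucc j σ m then f else 0) ∈ S := by
  by_cases hne : ∃ m, IsSucc j σ m
  · obtain ⟨m, hp⟩ := hne
    rw [Finset.sum_eq_single m]
    · simp [hp]
    · intro b _ hb
      rw [if_neg]
      intro hpb
      exact hb (σ.injective (le_antisymm (hpb.2.2 m hp.1 hp.2.1) (hp.2.2 b hpb.1 hpb.2.1)))
    · simp
  · push Not at hne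
    simpa [hne] using hf

open Classical in
/-- conditional difference for off-diagonal pairs -/
noncomputable def F (y : Fin n → R) (j m i : Fin n) (σ : Equiv.Perm (Fin n)) : R :=
  if IsPred j σ m ∧ i ≠ m ∧ i < j ∧ σ i < σ j then g y j σ m i else 0

lemma cond_swap (j m i : Fin n) (σ : Equiv.Perm (Fin n)) :
    (IsPred j (σ * Equiv.swap m i) i ∧ m ≠ i ∧ m < j ∧
      (σ * Equiv.swap m i) m < (σ * Equiv.swap m i) j) ↔
    (IsPred j σ m ∧ i ≠ m ∧ i < j ∧ σ i < σ j) := by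
  by_cases him : i = m
  · subst him; simp
  by_cases hm : m < j
  swap
  · simp [IsPred, hm]
  by_cases hi : i < j
  swap
  · simp [IsPred, hi]
  have hj : Equiv.swap m i j = j := Equiv.swap_apply_of_ne_of_ne hm.ne' hi.ne'
  simp only [IsPred, Equiv.Perm.mul_apply, hj, Equiv.swap_apply_left, Equiv.swap_apply_right,
    hm, hi, true_and, ne_eq, him, Ne.symm him, not_false_eq_true]
  refine and_congr_left fun hσi => and_congr_right fun hσm => ?_
  constructor
  · intro h k hk hσk
    by_cases h1 : k = m
    · subst h1; exact le_rfl
    by_cases h2 : k = i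
    · subst h2
      simpa using h m hm (by simpa using hσi)
    · simpa [Equiv.swap_apply_of_ne_of_ne h1 h2] using
        h k hk (by simpa [Equiv.swap_apply_of_ne_of_ne h1 h2] using hσk)
  · intro h k hk hσk
    by_cases h1 : k = m
    · subst h1; simpa using h i hi hσi
    by_cases h2 : k = i
    · subst h2; simp
    · rw [Equiv.swap_apply_of_ne_of_ne h1 h2] at hσk ⊢
      exact h k hk hσk

lemma F_pair (hy : ∀ i, y i ∈ S)
    (hyd : ∀ i k, i ≤ k → y i - y k ∈ S) (j m i : Fin n) : (∑ σ, F y j m i σ) + ∑ σ, F y j i m σ ∈ S := by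
  classical
  rw [← Equiv.sum_comp (Equiv.mulRight (Equiv.swap m i)) (F y j i m), ← Finset.sum_add_distrib]
  refine S.sum_mem fun σ _ => ?_
  simp only [F, Equiv.coe_mulRight, cond_swap]
  split_ifs with h
  · exact g_pair hy hyd j σ m i h.2.1 h.2.2.1 h.2.2.2 h.1
  · simp

lemma main (hy : ∀ i, y i ∈ S)
    (hyd : ∀ i k, i ≤ k → y i - y k ∈ S) (j : Fin n) :
    2 * ∑ σ : Equiv.Perm (Fin n), (y j - ∑ i ∈ low j σ, (y i - y j)) * mon y σ ∈ S := by
  classical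
  let c : Equiv.Perm (Fin n) → R := fun σ => ((low j σ).card + 1 : R) * (y j * mon y σ)
  have hc : ∀ σ, c σ ∈ S := fun σ => S.mul_mem (S.add_mem (natCast_mem S _) S.one_mem)
    (S.mul_mem (hy j) (mon_mem hy σ))
  have e1 : ∀ σ : Equiv.Perm (Fin n), (y j - ∑ i ∈ low j σ, (y i - y j)) * mon y σ =
      (c σ - ∑ m, if IsSucc j σ m then c σ else 0) +
      ((∑ m, if IsSucc j σ m then c σ else 0) -
        ∑ m, if IsPred j σ m then ∑ i ∈ low j σ, y i * mon y σ else 0) := by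
    intro σ
    rw [← sum_pred j σ (fun i => y i * mon y σ), ← Finset.sum_mul]
    simp only [c, Finset.sum_sub_distrib, Finset.sum_const, nsmul_eq_mul]
    ring
  have e2 : ∑ σ : Equiv.Perm (Fin n), ((∑ m, if IsSucc j σ m then c σ else 0) -
        ∑ m, if IsPred j σ m then ∑ i ∈ low j σ, y i * mon y σ else 0) =
      ∑ m, ∑ σ : Equiv.Perm (Fin n), ((if IsPred j σ m then g y j σ m m else 0) +
        ∑ i, F y j m i σ) := by
    rw [Finset.sum_sub_distrib, Finset.sum_comm, Finset.sum_comm (f := fun σ m =>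
      if IsPred j σ m then ∑ i ∈ low j σ, y i * mon y σ else 0), ← Finset.sum_sub_distrib]
    refine Finset.sum_congr rfl fun m _ => ?_
    rw [← Equiv.sum_comp (Equiv.mulRight (Equiv.swap m j)), ← Finset.sum_sub_distrib]
    refine Finset.sum_congr rfl fun σ _ => ?_
    simp only [Equiv.coe_mulRight, isSucc_swap, F]
    by_cases h : IsPred j σ m
    · simp only [h, if_true, true_and]
      have hm : m ∈ low j σ := by simp [low, h.1, h.2.1]
      have e3 : ∑ i, (if i ≠ m ∧ i < j ∧ σ i < σ j then g y j σ m i else 0) =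
          ∑ i ∈ (low j σ).erase m, g y j σ m i := by
        rw [← Finset.sum_filter]
        refine Finset.sum_congr ?_ fun _ _ => rfl
        ext i
        simp [low]
      rw [e3, Finset.add_sum_erase _ (fun i => g y j σ m i) hm]
      simp only [g, Finset.sum_sub_distrib, Finset.sum_const, nsmul_eq_mul, c]
      rw [← low_swap j m σ h]
      push_cast
      ring
    · simp [h]
  simp_rw [e1]
  rw [Finset.sum_add_distrib, e2, mul_add]
  refine S.add_mem (S.mul_mem (by exact_mod_cast natCast_mem S 2)
    (S.sum_mem fun σ _ => succ_mem j σ _ (hc σ))) ?_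
  simp only [Finset.sum_add_distrib, mul_add]
  refine S.add_mem (S.mul_mem (by exact_mod_cast natCast_mem S 2)
    (S.sum_mem fun m _ => S.sum_mem fun σ _ => ?_)) ?_
  · split_ifs with h
    · exact g_diag hy hyd j σ m h
    · exact S.zero_mem
  · have : ∀ m, ∑ σ, ∑ i, F y j m i σ = ∑ i, ∑ σ, F y j m i σ := fun m => Finset.sum_comm
    simp_rw [this]
    rw [two_mul]
    have hsym : ∑ m, ∑ i, ∑ σ, F y j m i σ = ∑ m, ∑ i, ∑ σ, F y j i m σ := Finset.sum_comm
    nth_rewrite 2 [hsym]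
    simp only [← Finset.sum_add_distrib]
    refine S.sum_mem fun m _ => S.sum_mem fun i _ => ?_
    simpa only [Finset.sum_add_distrib] using F_pair hy hyd j m i

end Abstract

/-- Polynomials with nonnegative coefficients. -/
def nonnegCoeff (n : ℕ) : Subsemiring (MvPolynomial (Fin n) ℝ) where
  carrier := {p | ∀ c, 0 ≤ MvPolynomial.coeff c p}
  mul_mem' := by
    intro a b ha hb c
    rw [MvPolynomial.coeff_mul]
    exact Finset.sum_nonneg fun x _ => mul_nonneg (ha _) (hb _)
  one_mem' := by
    intro c
    rw [MvPolynomial.coeff_one]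
    split_ifs <;> norm_num
  add_mem' := by
    intro a b ha hb c
    rw [MvPolynomial.coeff_add]
    exact add_nonneg (ha _) (hb _)
  zero_mem' := by
    intro c
    simp

lemma X_mem (n : ℕ) (i : Fin n) : (MvPolynomial.X i : MvPolynomial (Fin n) ℝ) ∈ nonnegCoeff n := by
  intro c
  rw [MvPolynomial.coeff_X]
  split_ifs <;> norm_num

/-- The tail sums. -/
noncomputable def Y (n : ℕ) (l : Fin n) : MvPolynomial (Fin n) ℝ :=
  ∑ h ∈ Finset.Ici l, MvPolynomial.X h

lemma Y_sub (n : ℕ) {i k : Fin n} (h : i ≤ k) :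
    Y n i - Y n k = ∑ l ∈ Finset.Ico i k, MvPolynomial.X l := by
  rw [sub_eq_iff_eq_add, Y, Y, ← Finset.sum_union]
  · congr 1
    ext l
    simp only [mem_Ici, mem_union, mem_Ico]
    constructor
    · intro hl
      rcases lt_or_ge l k with h' | h'
      · exact Or.inl ⟨hl, h'⟩
      · exact Or.inr h'
    · rintro (h' | h')
      · exact h'.1
      · exact h.trans h'
  · rw [Finset.disjoint_left]
    intro l hl hl'
    simp only [mem_Ici, mem_Ico] at hl hl'
    exact absurd hl.2 (not_lt.2 hl')

lemma Ppoly_eq (n : ℕ) (j : Fin n) :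
    Ppoly n j = ∑ σ : Equiv.Perm (Fin n),
      (Y n j - ∑ i ∈ low j σ, (Y n i - Y n j)) * mon (Y n) σ := by
  unfold Ppoly
  rw [← Equiv.sum_comp (Equiv.mulLeft (Fin.revPerm : Equiv.Perm (Fin n)))]
  refine Finset.sum_congr rfl fun σ _ => ?_
  congr 1
  · congr 1
    have : ∀ i ∈ low j σ, Y n i - Y n j =
        ∑ l ∈ Finset.Iio j, if i ≤ l then (MvPolynomial.X l : MvPolynomial (Fin n) ℝ) else 0 := by
      intro i hi
      simp only [low, mem_filter, mem_Iio] at hi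
      rw [Y_sub n hi.1.le, ← Finset.sum_filter]
      refine Finset.sum_congr ?_ fun _ _ => rfl
      ext l
      simp [and_comm]
    rw [Finset.sum_congr rfl this, Finset.sum_comm]
    refine Finset.sum_congr rfl fun k hk => ?_
    rw [← Finset.sum_filter, Finset.sum_const, nsmul_eq_mul]
    congr 3
    ext i
    simp only [mem_Iio] at hk
    simp only [low, mem_filter, mem_Iic, mem_Iio, Equiv.coe_mulLeft, Equiv.Perm.mul_apply,
      Fin.revPerm_apply, Fin.rev_lt_rev]
    constructor
    · rintro ⟨h1, h2⟩
      exact ⟨⟨h1.trans_lt hk, h2⟩, h1⟩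
    · rintro ⟨⟨h1, h2⟩, h3⟩
      exact ⟨h3, h2⟩
  · unfold mon
    refine Finset.prod_congr rfl fun l _ => ?_
    congr 1
    have := (σ l).isLt
    simp only [Equiv.coe_mulLeft, Equiv.Perm.mul_apply, Fin.revPerm_apply, Fin.val_rev]
    omega

end Stmt17Aux

/-- all coefficients of `P` are nonnegative; in particular `P(x) ≥ 0`
for all `x` with nonnegative coordinates. -/
theorem stmt17 (n : ℕ) (hn : 2 ≤ n) (j : Fin n) (hj : 1 ≤ (j : ℕ)) :
    (∀ c : Fin n →₀ ℕ, 0 ≤ MvPolynomial.coeff c (Ppoly n j)) ∧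
    ∀ x : Fin n → ℝ, (∀ i, 0 ≤ x i) → 0 ≤ MvPolynomial.eval x (Ppoly n j) := by
  have key : ∀ c : Fin n →₀ ℕ, 0 ≤ MvPolynomial.coeff c (Ppoly n j) := by
    intro c
    have h := Stmt17Aux.main (S := Stmt17Aux.nonnegCoeff n) (y := Stmt17Aux.Y n)
      (fun i => Subsemiring.sum_mem _ fun k _ => Stmt17Aux.X_mem n k)
      (fun i k hik => by
        rw [Stmt17Aux.Y_sub n hik]
        exact Subsemiring.sum_mem _ fun k _ => Stmt17Aux.X_mem n k) j
    rw [← Stmt17Aux.Ppoly_eq, two_mul] at h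
    have h2 := h c
    rw [MvPolynomial.coeff_add] at h2
    linarith
  refine ⟨key, fun x hx => ?_⟩
  rw [MvPolynomial.eval_eq]
  exact Finset.sum_nonneg fun d _ => mul_nonneg (key d)
    (Finset.prod_nonneg fun i _ => pow_nonneg (hx i) _)
end

section
/- Let p_1 ≥ p_2 ≥ … ≥ p_n > 0 with ∑_i p_i = 1 and let Q be the stationary distribution of the Transposition chain, Q(π) ∝ ∏_i p_i^{n−π(i)}. Then for every j ∈ {2,…,n}, s_j := ∑_{i=1}^{j−1}(p_i − p_j)·P_{π∼Q}[π(j) < π(i)] ≤ p_j. Consequently, the stationary expected access cost E_{π∼Q}[∑_i p_i π(i)] is at most OPT(p) + 1, where OPT(p) = ∑_{i=1}^n i·p_i. -/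
open Finset

noncomputable def wt {n : ℕ} (p : Fin n → ℝ) (π : Equiv.Perm (Fin n)) : ℝ :=
  ∏ i, p i ^ (n - 1 - (π i : ℕ))

lemma wt_pos {n : ℕ} {p : Fin n → ℝ} (hpos : ∀ i, 0 < p i) (π : Equiv.Perm (Fin n)) :
    0 < wt p π := Finset.prod_pos fun i _ => pow_pos (hpos i) _

/-- exchanging the items `a` (front) and `b` (behind) -/
lemma wt_swap {n : ℕ} (p : Fin n → ℝ) (π : Equiv.Perm (Fin n)) (a b : Fin n)
    (h : π a < π b) :
    wt p π * p b ^ ((π b : ℕ) - π a) = wt p (π * Equiv.swap a b) * p a ^ ((π b : ℕ) - π a) := by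
  have hab : a ≠ b := by rintro rfl; exact lt_irrefl _ h
  have hb : b ∈ (univ : Finset (Fin n)).erase a := by simp [hab.symm]
  have hlt : (π a : ℕ) < π b := h
  have hbn := (π b).isLt
  unfold wt
  rw [← Finset.mul_prod_erase univ _ (mem_univ a), ← Finset.mul_prod_erase _ _ hb,
    ← Finset.mul_prod_erase univ (fun i => p i ^ (n - 1 - ((π * Equiv.swap a b) i : ℕ))) (mem_univ a),
    ← Finset.mul_prod_erase _ (fun i => p i ^ (n - 1 - ((π * Equiv.swap a b) i : ℕ))) hb]
  have hr : ∏ x ∈ (univ.erase a).erase b, p x ^ (n - 1 - ((π * Equiv.swap a b) x : ℕ))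
      = ∏ x ∈ (univ.erase a).erase b, p x ^ (n - 1 - (π x : ℕ)) := by
    refine Finset.prod_congr rfl fun x hx => ?_
    simp only [mem_erase, mem_univ, and_true] at hx
    simp [Equiv.swap_apply_of_ne_of_ne hx.2 hx.1]
  rw [hr]
  simp only [Equiv.Perm.mul_apply, Equiv.swap_apply_left, Equiv.swap_apply_right]
  have e1 : n - 1 - (π a : ℕ) = (n - 1 - (π b : ℕ)) + ((π b : ℕ) - π a) := by omega
  rw [e1, pow_add, pow_add]
  ring

noncomputable def xx {n : ℕ} (p : Fin n → ℝ) (j i : Fin n) : ℝ := min 1 (p j / p i)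

lemma xx_pos {n : ℕ} {p : Fin n → ℝ} (hpos : ∀ i, 0 < p i) (j i : Fin n) : 0 < xx p j i :=
  lt_min one_pos (div_pos (hpos j) (hpos i))

lemma xx_le {n : ℕ} (p : Fin n → ℝ) (j i : Fin n) : xx p j i ≤ 1 := min_le_left _ _

lemma xx_anti {n : ℕ} {p : Fin n → ℝ} (hpos : ∀ i, 0 < p i) (j a b : Fin n) (h : p b ≤ p a) :
    xx p j a ≤ xx p j b :=
  min_le_min le_rfl (div_le_div_of_nonneg_left (hpos j).le (hpos b) h)

noncomputable def YY {n : ℕ} (p : Fin n → ℝ) (j : Fin n) (π : Equiv.Perm (Fin n)) (q : ℕ) : ℝ :=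
  if h : q < n then xx p j (π.symm ⟨q, h⟩) else 1

noncomputable def TT {n : ℕ} (p : Fin n → ℝ) (j : Fin n) (q : ℕ) (π : Equiv.Perm (Fin n)) : ℝ :=
  YY p j π q ^ ((π j : ℕ) - (q + 1)) - YY p j π (q + 1) ^ ((π j : ℕ) - (q + 1))

lemma TT_zero {n : ℕ} (p : Fin n → ℝ) (j : Fin n) (q : ℕ) (π : Equiv.Perm (Fin n))
    (h : (π j : ℕ) ≤ q + 1) : TT p j q π = 0 := by
  have : (π j : ℕ) - (q + 1) = 0 := by omega
  simp [TT, this]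

lemma stepD {n : ℕ} {p : Fin n → ℝ} (hpos : ∀ i, 0 < p i) (j : Fin n) (q : ℕ) :
    ∑ π, wt p π * TT p j q π ≤ 0 := by
  by_cases hq : q + 1 < n
  swap
  · refine le_of_eq (Finset.sum_eq_zero fun π _ => ?_)
    rw [TT_zero _ _ _ _ (by have := (π j).isLt; omega), mul_zero]
  set u : Fin n := ⟨q, by omega⟩ with hu
  set v : Fin n := ⟨q + 1, hq⟩ with hv
  have huv : u ≠ v := by simp [hu, hv, Fin.ext_iff]
  have hre : ∑ π, wt p π * TT p j q π
      = ∑ π, wt p (Equiv.swap u v * π) * TT p j q (Equiv.swap u v * π) :=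
    (Equiv.sum_comp (Equiv.mulLeft (Equiv.swap u v)) fun π => wt p π * TT p j q π).symm
  suffices h : ∑ π, (wt p π * TT p j q π
      + wt p (Equiv.swap u v * π) * TT p j q (Equiv.swap u v * π)) ≤ 0 by
    rw [Finset.sum_add_distrib, ← hre] at h; linarith
  refine Finset.sum_nonpos fun π _ => ?_
  by_cases hc : (π j : ℕ) ≤ q + 1
  · rw [TT_zero _ _ _ _ hc, TT_zero]
    · simp
    · rw [Equiv.Perm.mul_apply, Equiv.swap_apply_def]
      split_ifs <;> simp_all
  push Not at hc
  have h1 : π j ≠ u := by intro h; rw [h] at hc; simp [hu] at hc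
  have h2 : π j ≠ v := by intro h; rw [h] at hc; simp [hv] at hc
  set a := π.symm u with ha
  set b := π.symm v with hb
  have hpa : π a = u := by simp [ha]
  have hpb : π b = v := by simp [hb]
  have hmul : Equiv.swap u v * π = π * Equiv.swap a b := by
    rw [← hpa, ← hpb, Equiv.mul_swap_eq_swap_mul]
  have hw := wt_swap p π a b (by rw [hpa, hpb]; simp [hu, hv])
  rw [← hmul] at hw
  have he : ((π b : Fin n) : ℕ) - (π a : ℕ) = 1 := by rw [hpa, hpb]; simp [hu, hv]
  rw [he, pow_one, pow_one] at hw
  have hT : TT p j q π = xx p j a ^ ((π j : ℕ) - (q + 1)) - xx p j b ^ ((π j : ℕ) - (q + 1)) := by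
    have : q < n := by omega
    simp [TT, YY, hq, this, ha, hb, hu, hv]
  have hT' : TT p j q (Equiv.swap u v * π) = - TT p j q π := by
    have hqn : q < n := by omega
    have h3 : (Equiv.swap u v * π) j = π j := by
      rw [Equiv.Perm.mul_apply, Equiv.swap_apply_of_ne_of_ne h1 h2]
    have h4 : (Equiv.swap u v * π).symm u = b := by
      rw [Equiv.symm_apply_eq, Equiv.Perm.mul_apply, hpb, Equiv.swap_apply_right]
    have h5 : (Equiv.swap u v * π).symm v = a := by
      rw [Equiv.symm_apply_eq, Equiv.Perm.mul_apply, hpa, Equiv.swap_apply_left]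
    rw [hT]
    unfold TT YY
    rw [h3, dif_pos hqn, dif_pos hq, ← hu, ← hv, h4, h5]
    ring
  rw [hT']
  have hwp := wt_pos hpos π
  have hwp' := wt_pos hpos (Equiv.swap u v * π)
  have hpa0 := hpos a
  have hpb0 := hpos b
  rcases le_total (p a) (p b) with hle | hle
  · have hx := pow_le_pow_left₀ (xx_pos hpos j b).le (xx_anti hpos j b a hle) ((π j : ℕ) - (q + 1))
    have : wt p π ≤ wt p (Equiv.swap u v * π) := by
      by_contra hcon
      push Not at hcon
      nlinarith
    rw [hT]; nlinarith
  · have hx := pow_le_pow_left₀ (xx_pos hpos j a).le (xx_anti hpos j a b hle) ((π j : ℕ) - (q + 1))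
    have : wt p (Equiv.swap u v * π) ≤ wt p π := by
      by_contra hcon
      push Not at hcon
      nlinarith
    rw [hT]; nlinarith

lemma stepC {n : ℕ} {p : Fin n → ℝ} (hpos : ∀ i, 0 < p i) (j : Fin n) (π : Equiv.Perm (Fin n)) :
    ∑ i, (xx p j i ^ ((π j : ℕ) - (π i + 1)) - xx p j i ^ ((π j : ℕ) - π i))
      ≤ 1 + ∑ q ∈ range n, TT p j q π := by
  have h1 : ∑ i, (xx p j i ^ ((π j : ℕ) - (π i + 1)) - xx p j i ^ ((π j : ℕ) - π i))
      = ∑ q : Fin n, (YY p j π q ^ ((π j : ℕ) - (q + 1)) - YY p j π q ^ ((π j : ℕ) - q)) := by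
    rw [← Equiv.sum_comp π.symm]
    refine Finset.sum_congr rfl fun i _ => ?_
    simp [YY]
  rw [h1, Fin.sum_univ_eq_sum_range
    (fun q => YY p j π q ^ ((π j : ℕ) - (q + 1)) - YY p j π q ^ ((π j : ℕ) - q)) n]
  have h2 := Finset.sum_range_sub (fun q => YY p j π q ^ ((π j : ℕ) - q)) n
  have h3 : ∑ q ∈ range n, (YY p j π q ^ ((π j : ℕ) - (q + 1)) - YY p j π q ^ ((π j : ℕ) - q))
      = ∑ q ∈ range n, TT p j q π + ∑ q ∈ range n,
        (YY p j π (q+1) ^ ((π j : ℕ) - (q+1)) - YY p j π q ^ ((π j : ℕ) - q)) := by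
    rw [← Finset.sum_add_distrib]
    refine Finset.sum_congr rfl fun i _ => ?_
    unfold TT; ring
  rw [h3, h2]
  have h4 : (π j : ℕ) - n = 0 := by have := (π j).isLt; omega
  have h5 : 0 ≤ YY p j π 0 ^ ((π j : ℕ) - 0) := by
    apply pow_nonneg
    unfold YY
    split_ifs
    · exact (xx_pos hpos j _).le
    · exact zero_le_one
  simp only [h4, pow_zero]
  linarith

lemma stepA {n : ℕ} {p : Fin n → ℝ} (hpos : ∀ i, 0 < p i) (i j : Fin n) (hij : i ≠ j)
    (hp : p j ≤ p i) :
    (p i - p j) * ∑ π, wt p π * (if π j < π i then 1 else 0)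
      = p j * ∑ π, wt p π * (xx p j i ^ ((π j : ℕ) - (π i + 1)) - xx p j i ^ ((π j : ℕ) - π i)) := by
  have hre : ∑ π, wt p π * (if π j < π i then (1:ℝ) else 0)
      = ∑ π, wt p (π * Equiv.swap i j) *
        (if (π * Equiv.swap i j) j < (π * Equiv.swap i j) i then 1 else 0) :=
    (Equiv.sum_comp (Equiv.mulRight (Equiv.swap i j))
      fun π => wt p π * (if π j < π i then (1:ℝ) else 0)).symm
  rw [hre, Finset.mul_sum, Finset.mul_sum]
  refine Finset.sum_congr rfl fun π _ => ?_
  simp only [Equiv.Perm.mul_apply, Equiv.swap_apply_left, Equiv.swap_apply_right]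
  split_ifs with h
  · have hw := wt_swap p π i j h
    have hx : xx p j i = p j / p i := min_eq_right ((div_le_one (hpos i)).2 hp)
    obtain ⟨d, hd⟩ : ∃ d, (π j : ℕ) - π i = d + 1 :=
      ⟨(π j : ℕ) - (π i + 1), by have : (π i : ℕ) < π j := h; omega⟩
    have hd' : (π j : ℕ) - (π i + 1) = d := by omega
    rw [hd] at hw
    rw [hd, hd', hx]
    have hi := hpos i
    have hw2 : wt p (π * Equiv.swap i j) = wt p π * p j ^ (d+1) / p i ^ (d+1) := by
      rw [hw]; field_simp
    rw [hw2, div_pow, div_pow]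
    field_simp
    try ring
  · have h0 : (π j : ℕ) ≤ π i := not_lt.1 h
    have e1 : (π j : ℕ) - π i = 0 := by omega
    have e2 : (π j : ℕ) - (π i + 1) = 0 := by omega
    simp [e1, e2]

lemma mainS {n : ℕ} {p : Fin n → ℝ} (hpos : ∀ i, 0 < p i)
    (hmono : ∀ a b : Fin n, a ≤ b → p b ≤ p a) (j : Fin n) :
    ∑ i ∈ Finset.Iio j, (p i - p j) * ∑ π, wt p π * (if π j < π i then 1 else 0)
      ≤ p j * ∑ π, wt p π := by
  have h1 : ∑ i ∈ Finset.Iio j, (p i - p j) * ∑ π, wt p π * (if π j < π i then 1 else 0)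
      = ∑ i ∈ Finset.Iio j, p j * ∑ π, wt p π *
        (xx p j i ^ ((π j : ℕ) - (π i + 1)) - xx p j i ^ ((π j : ℕ) - π i)) := by
    refine Finset.sum_congr rfl fun i hi => ?_
    have hi' := Finset.mem_Iio.1 hi
    exact stepA hpos i j hi'.ne (hmono i j hi'.le)
  rw [h1, ← Finset.mul_sum]
  refine mul_le_mul_of_nonneg_left ?_ (hpos j).le
  calc _ ≤ ∑ i, ∑ π, wt p π *
        (xx p j i ^ ((π j : ℕ) - (π i + 1)) - xx p j i ^ ((π j : ℕ) - π i)) := by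
        refine Finset.sum_le_sum_of_subset_of_nonneg (Finset.subset_univ _) fun i _ _ => ?_
        refine Finset.sum_nonneg fun π _ => mul_nonneg (wt_pos hpos π).le (sub_nonneg.2 ?_)
        exact pow_le_pow_of_le_one (xx_pos hpos j i).le (xx_le p j i) (by omega)
    _ = ∑ π, wt p π * ∑ i,
        (xx p j i ^ ((π j : ℕ) - (π i + 1)) - xx p j i ^ ((π j : ℕ) - π i)) := by
        rw [Finset.sum_comm]
        simp only [Finset.mul_sum]
    _ ≤ ∑ π, wt p π * (1 + ∑ q ∈ range n, TT p j q π) :=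
        Finset.sum_le_sum fun π _ => mul_le_mul_of_nonneg_left (stepC hpos j π) (wt_pos hpos π).le
    _ = ∑ π, wt p π + ∑ q ∈ range n, ∑ π, wt p π * TT p j q π := by
        rw [Finset.sum_comm, ← Finset.sum_add_distrib]
        simp only [mul_add, mul_one, Finset.mul_sum]
    _ ≤ ∑ π, wt p π := by
        have := Finset.sum_nonpos fun q (_ : q ∈ range n) => stepD hpos j q
        linarith

lemma pos_eq {n : ℕ} (π : Equiv.Perm (Fin n)) (i : Fin n) :
    ((π i : ℕ) : ℝ) = ∑ k, if π k < π i then (1:ℝ) else 0 := by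
  rw [Equiv.sum_comp π (fun k => if k < π i then (1:ℝ) else 0), Finset.sum_boole]
  have : (univ.filter fun k => k < π i) = Finset.Iio (π i) := by ext; simp
  rw [this, Fin.card_Iio]

/-- splitting a double sum into unordered pairs -/
lemma pair_split {n : ℕ} (f : Fin n → Fin n → ℝ) (h0 : ∀ i, f i i = 0) :
    ∑ i, ∑ k, f i k = ∑ j, ∑ i ∈ Finset.Iio j, (f i j + f j i) := by
  have h : ∀ j, ∑ i ∈ Finset.Iio j, (f i j + f j i)
      = ∑ i, (if i < j then f i j else 0) + ∑ i, (if i < j then f j i else 0) := by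
    intro j
    rw [Finset.sum_add_distrib, ← Finset.sum_filter, ← Finset.sum_filter]
    have : (univ.filter fun k => k < j) = Finset.Iio j := by ext; simp
    rw [this]
  simp only [h]
  rw [Finset.sum_add_distrib, Finset.sum_comm (f := fun j i => if i < j then f i j else 0),
    ← Finset.sum_add_distrib]
  refine Finset.sum_congr rfl fun i _ => ?_
  rw [← Finset.sum_add_distrib]
  refine Finset.sum_congr rfl fun k _ => ?_
  rcases lt_trichotomy i k with h | h | h
  · simp [h, h.not_gt]
  · simp [h, h0]
  · simp [h, h.not_gt]

lemma cost_eq {n : ℕ} (p : Fin n → ℝ) (π : Equiv.Perm (Fin n)) :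
    ∑ i, p i * ((π i : ℕ) + 1 : ℝ) = ∑ i : Fin n, ((i : ℕ) + 1 : ℝ) * p i
      + ∑ j, ∑ i ∈ Finset.Iio j, (p i - p j) * (if π j < π i then 1 else 0) := by
  have h1 : ∑ i, p i * ((π i : ℕ) + 1 : ℝ)
      = ∑ i, ∑ k, p i * (if π k < π i then 1 else 0) + ∑ i, p i := by
    rw [← Finset.sum_add_distrib]
    refine Finset.sum_congr rfl fun i _ => ?_
    rw [← Finset.mul_sum, ← pos_eq]; ring
  rw [h1, pair_split (fun i k => p i * (if π k < π i then 1 else 0)) (by simp),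
    ← Finset.sum_add_distrib, ← Finset.sum_add_distrib]
  refine Finset.sum_congr rfl fun j _ => ?_
  have h2 : ((j : ℕ) : ℝ) * p j = ∑ i ∈ Finset.Iio j, p j := by
    rw [Finset.sum_const, Fin.card_Iio, nsmul_eq_mul]
  rw [add_mul, h2, one_mul, add_right_comm, ← Finset.sum_add_distrib]
  congr 1
  refine Finset.sum_congr rfl fun i hi => ?_
  have hne : π i ≠ π j := fun h => (Finset.mem_Iio.1 hi).ne (π.injective h)
  rcases lt_or_gt_of_ne hne with h | h
  · simp [h, h.not_gt]
  · simp [h, h.not_gt]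



/-- main theorem: for the stationary distribution
`Q(π) ∝ ∏ p_i^{n−π(i)}` of the Transposition chain, `s_j ≤ p_j` for every
`j ∈ {2,…,n}`, and consequently the stationary expected access cost is at most
`OPT(p) + 1`.  Positions are 0-indexed: the cost of item `i` is `(π i) + 1`. -/
theorem stmt18 (n : ℕ) (hn : 1 ≤ n) (p : Fin n → ℝ)
    (hpos : ∀ i, 0 < p i) (hmono : ∀ a b : Fin n, a ≤ b → p b ≤ p a)
    (hsum : ∑ i, p i = 1)
    (Z : ℝ) (hZ : Z = ∑ σ : Equiv.Perm (Fin n), ∏ i, p i ^ (n - 1 - (σ i : ℕ)))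
    (Q : Equiv.Perm (Fin n) → ℝ)
    (hQ : ∀ π : Equiv.Perm (Fin n), Q π = (∏ i, p i ^ (n - 1 - (π i : ℕ))) / Z) :
    (∀ j : Fin n, 1 ≤ (j : ℕ) →
      ∑ i ∈ Finset.Iio j,
          (p i - p j) * (∑ π : Equiv.Perm (Fin n), Q π * if π j < π i then 1 else 0)
        ≤ p j) ∧
    (∑ π : Equiv.Perm (Fin n), Q π * ∑ i, p i * ((π i : ℕ) + 1 : ℝ))
      ≤ (∑ i : Fin n, ((i : ℕ) + 1 : ℝ) * p i) + 1 := by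

  have hZ' : Z = ∑ π, wt p π := hZ
  have hQ' : ∀ π, Q π = wt p π / Z := hQ
  have hZpos : 0 < Z := by
    rw [hZ']; exact Finset.sum_pos (fun π _ => wt_pos hpos π) Finset.univ_nonempty
  have hQ1 : ∑ π, Q π = 1 := by
    simp only [hQ']
    rw [← Finset.sum_div, ← hZ', div_self hZpos.ne']
  have hS : ∀ j : Fin n, ∑ i ∈ Finset.Iio j,
      (p i - p j) * (∑ π : Equiv.Perm (Fin n), Q π * if π j < π i then 1 else 0) ≤ p j := by
    intro j
    have h := mainS hpos hmono j
    rw [← hZ', ← div_le_iff₀ hZpos, Finset.sum_div] at h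
    refine le_trans (le_of_eq (Finset.sum_congr rfl fun i _ => ?_)) h
    rw [mul_div_assoc, Finset.sum_div]
    congr 1
    refine Finset.sum_congr rfl fun π _ => ?_
    rw [hQ']; ring
  refine ⟨fun j _ => hS j, ?_⟩
  simp only [cost_eq p, mul_add (Q _)]
  rw [Finset.sum_add_distrib, ← Finset.sum_mul, hQ1, one_mul]
  have h2 : ∑ π, Q π * ∑ j, ∑ i ∈ Finset.Iio j, (p i - p j) * (if π j < π i then 1 else 0)
      = ∑ j, ∑ i ∈ Finset.Iio j,
        (p i - p j) * (∑ π : Equiv.Perm (Fin n), Q π * if π j < π i then 1 else 0) := by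
    simp only [Finset.mul_sum]
    rw [Finset.sum_comm]
    refine Finset.sum_congr rfl fun j _ => ?_
    rw [Finset.sum_comm]
    refine Finset.sum_congr rfl fun i _ => Finset.sum_congr rfl fun π _ => ?_
    ring
  rw [h2]
  exact add_le_add le_rfl ((Finset.sum_le_sum fun j _ => hS j).trans hsum.le)
end

section
/- Let p_1 ≥ p_2 ≥ … ≥ p_n > 0 be arbitrary positive strengths (not necessarily summing to 1), and let Q(π) ∝ ∏_i p_i^{n−π(i)} be the stationary distribution of the gladiator chain on S_n. Then for every j ∈ [n], E_{π∼Q}[ ∑_{i : π(i) > π(j)} max{p_i − p_j, 0} ] ≤ p_j. -/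
open Finset

namespace Glad

lemma two_var (x y : ℝ) (hx : 0 < x) (hy : 0 < y) (d r : ℕ) :
    x ^ (d + r) * y ^ (d + 1) + y ^ (d + r) * x ^ (d + 1) ≤
      x ^ (d + r + 1) * y ^ d + y ^ (d + r + 1) * x ^ d := by
  have h : 0 ≤ (x ^ r - y ^ r) * (x - y) := by
    rcases le_total x y with h | h
    · exact mul_nonneg_of_nonpos_of_nonpos
        (sub_nonpos.2 (pow_le_pow_left₀ hx.le h r)) (sub_nonpos.2 h)
    · exact mul_nonneg (sub_nonneg.2 (pow_le_pow_left₀ hy.le h r)) (sub_nonneg.2 h)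
  have h2 : 0 ≤ (x * y) ^ d * ((x ^ r - y ^ r) * (x - y)) := by positivity
  have e : (x * y) ^ d * ((x ^ r - y ^ r) * (x - y)) =
      x ^ (d + r + 1) * y ^ d + y ^ (d + r + 1) * x ^ d
       - (x ^ (d + r) * y ^ (d + 1) + y ^ (d + r) * x ^ (d + 1)) := by
    simp only [mul_pow, pow_add, pow_one]; ring
  linarith

lemma key3 (a x y : ℝ) (ha : 0 < a) (hx : a ≤ x) (hy : a ≤ y) (A B C : ℕ)
    (hAB : B < A) (hBC : C < B) :
    a ^ A * x ^ B * y ^ C * y + a ^ A * y ^ B * x ^ C * x ≤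
      a * (a ^ B * x ^ A * y ^ C) + a * (a ^ B * y ^ A * x ^ C) := by
  obtain ⟨d, rfl⟩ := Nat.exists_eq_add_of_lt hAB
  obtain ⟨r, rfl⟩ := Nat.exists_eq_add_of_lt hBC
  have hx0 := ha.trans_le hx
  have hy0 := ha.trans_le hy
  have h1 := two_var x y hx0 hy0 C (r + 1)
  have hxd := pow_le_pow_left₀ ha.le hx d
  have hyd := pow_le_pow_left₀ ha.le hy d
  have h2 : a ^ d * (x ^ (C + (r + 1)) * y ^ (C + 1) + y ^ (C + (r + 1)) * x ^ (C + 1)) ≤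
      x ^ d * (x ^ (C + (r + 1) + 1) * y ^ C) + y ^ d * (y ^ (C + (r + 1) + 1) * x ^ C) := by
    calc _ ≤ a ^ d * (x ^ (C + (r + 1) + 1) * y ^ C + y ^ (C + (r + 1) + 1) * x ^ C) := by gcongr
      _ ≤ _ := by rw [mul_add]; gcongr
  have h3 := mul_le_mul_of_nonneg_left h2 (pow_pos ha (C + r + 2)).le
  calc _ = _ := by ring
    _ ≤ _ := h3
    _ = _ := by ring

lemma key2 (a x : ℝ) (ha : 0 < a) (hx : a ≤ x) (A B : ℕ) (hAB : B < A) :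
    a ^ A * x ^ B * x ≤ a * (a ^ B * x ^ A) := by
  obtain ⟨d, rfl⟩ := Nat.exists_eq_add_of_lt hAB
  have hx0 := ha.trans_le hx
  have hxd := pow_le_pow_left₀ ha.le hx d
  have h3 := mul_le_mul_of_nonneg_left hxd (by positivity : 0 ≤ a ^ (B + 1) * x ^ (B + 1))
  calc _ = _ := by ring
    _ ≤ _ := h3
    _ = _ := by ring

/-- Unnormalized weight. -/
noncomputable def w {n : ℕ} (p : Fin n → ℝ) (π : Equiv.Perm (Fin n)) : ℝ :=
  ∏ i, p i ^ (n - 1 - (π i : ℕ))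

lemma w_pos {n : ℕ} (p : Fin n → ℝ) (hpos : ∀ i, 0 < p i) (π : Equiv.Perm (Fin n)) :
    0 < w p π := Finset.prod_pos fun i _ => pow_pos (hpos i) _

lemma w3 {n : ℕ} (p : Fin n → ℝ) (hpos : ∀ i, 0 < p i) (π : Equiv.Perm (Fin n))
    (j c i : Fin n) (hjc : j ≠ c) (hji : j ≠ i) (hci : c ≠ i) :
    ∃ R : ℝ, 0 ≤ R ∧ ∀ τ : Equiv.Perm (Fin n),
      (∀ t, t ≠ j → t ≠ c → t ≠ i → τ t = π t) →
      w p τ = R * (p j ^ (n - 1 - (τ j : ℕ)) * p c ^ (n - 1 - (τ c : ℕ)) *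
        p i ^ (n - 1 - (τ i : ℕ))) := by
  refine ⟨∏ t ∈ univ \ {j, c, i}, p t ^ (n - 1 - (π t : ℕ)),
    Finset.prod_nonneg fun t _ => (pow_pos (hpos t) _).le, ?_⟩
  intro τ hτ
  unfold w
  rw [← Finset.prod_sdiff (Finset.subset_univ ({j, c, i} : Finset (Fin n)))]
  congr 1
  · refine Finset.prod_congr rfl fun t ht => ?_
    simp only [mem_sdiff, mem_univ, true_and, mem_insert, mem_singleton, not_or] at ht
    rw [hτ t ht.1 ht.2.1 ht.2.2]
  · rw [Finset.prod_insert (by simp [hjc, hji]), Finset.prod_insert (by simp [hci]),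
      Finset.prod_singleton, mul_assoc]

lemma w2 {n : ℕ} (p : Fin n → ℝ) (hpos : ∀ i, 0 < p i) (π : Equiv.Perm (Fin n))
    (j c : Fin n) (hjc : j ≠ c) :
    ∃ R : ℝ, 0 ≤ R ∧ ∀ τ : Equiv.Perm (Fin n),
      (∀ t, t ≠ j → t ≠ c → τ t = π t) →
      w p τ = R * (p j ^ (n - 1 - (τ j : ℕ)) * p c ^ (n - 1 - (τ c : ℕ))) := by
  refine ⟨∏ t ∈ univ \ {j, c}, p t ^ (n - 1 - (π t : ℕ)),
    Finset.prod_nonneg fun t _ => (pow_pos (hpos t) _).le, ?_⟩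
  intro τ hτ
  unfold w
  rw [← Finset.prod_sdiff (Finset.subset_univ ({j, c} : Finset (Fin n)))]
  congr 1
  · refine Finset.prod_congr rfl fun t ht => ?_
    simp only [mem_sdiff, mem_univ, true_and, mem_insert, mem_singleton, not_or] at ht
    rw [hτ t ht.1 ht.2]
  · rw [Finset.prod_insert (by simp [hjc]), Finset.prod_singleton]

/-- Stronger items ranked below `j`. -/
noncomputable def D {n : ℕ} (p : Fin n → ℝ) (j : Fin n) (π : Equiv.Perm (Fin n)) :
    Finset (Fin n) := univ.filter (fun i => p j < p i ∧ π j < π i)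

lemma mem_D {n : ℕ} {p : Fin n → ℝ} {j i : Fin n} {π : Equiv.Perm (Fin n)} :
    i ∈ D p j π ↔ p j < p i ∧ π j < π i := by simp [D]

lemma exists_c {n : ℕ} (p : Fin n → ℝ) (j : Fin n) (π : Equiv.Perm (Fin n)) :
    ∃ c, (D p j π).Nonempty → c ∈ D p j π ∧ ∀ i ∈ D p j π, π c ≤ π i := by
  by_cases h : (D p j π).Nonempty
  · obtain ⟨c, hc, hm⟩ := Finset.exists_min_image (D p j π) (fun i => π i) h
    exact ⟨c, fun _ => ⟨hc, hm⟩⟩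
  · exact ⟨j, fun h' => absurd h' h⟩

/-- The nearest stronger item below `j`. -/
noncomputable def c {n : ℕ} (p : Fin n → ℝ) (j : Fin n) (π : Equiv.Perm (Fin n)) : Fin n :=
  (exists_c p j π).choose

lemma c_mem {n : ℕ} {p : Fin n → ℝ} {j i : Fin n} {π : Equiv.Perm (Fin n)}
    (h : i ∈ D p j π) : c p j π ∈ D p j π := ((exists_c p j π).choose_spec ⟨i, h⟩).1

lemma c_le {n : ℕ} {p : Fin n → ℝ} {j i : Fin n} {π : Equiv.Perm (Fin n)}
    (h : i ∈ D p j π) : π (c p j π) ≤ π i := ((exists_c p j π).choose_spec ⟨i, h⟩).2 i h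

lemma c_uniq {n : ℕ} {p : Fin n → ℝ} {j i : Fin n} {π : Equiv.Perm (Fin n)}
    (h : i ∈ D p j π) (hm : ∀ k ∈ D p j π, π i ≤ π k) : c p j π = i :=
  π.injective (le_antisymm (c_le h) (hm _ (c_mem h)))

/-- Exchange `j` with the nearest stronger item below. -/
noncomputable def T {n : ℕ} (p : Fin n → ℝ) (j : Fin n) (π : Equiv.Perm (Fin n)) :
    Equiv.Perm (Fin n) := π * Equiv.swap j (c p j π)

lemma T_j {n : ℕ} (p : Fin n → ℝ) (j : Fin n) (π : Equiv.Perm (Fin n)) :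
    T p j π j = π (c p j π) := by simp [T]

lemma T_c {n : ℕ} (p : Fin n → ℝ) (j : Fin n) (π : Equiv.Perm (Fin n)) :
    T p j π (c p j π) = π j := by simp [T]

lemma T_ne {n : ℕ} (p : Fin n → ℝ) (j : Fin n) (π : Equiv.Perm (Fin n)) (t : Fin n)
    (h1 : t ≠ j) (h2 : t ≠ c p j π) : T p j π t = π t := by
  simp [T, Equiv.swap_apply_of_ne_of_ne h1 h2]

lemma D_ne {n : ℕ} {p : Fin n → ℝ} {j i : Fin n} {π : Equiv.Perm (Fin n)}
    (h : i ∈ D p j π) : i ≠ j := by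
  rintro rfl
  exact lt_irrefl _ (mem_D.1 h).1

lemma T_inj_aux {n : ℕ} (p : Fin n → ℝ) (j : Fin n) (π ρ : Equiv.Perm (Fin n))
    (hπ : (D p j π).Nonempty) (hρ : (D p j ρ).Nonempty) (h : T p j π = T p j ρ) :
    ¬ (T p j π (c p j π) < T p j π (c p j ρ)) := by
  intro hlt
  obtain ⟨a, ha⟩ := hπ
  obtain ⟨b, hb⟩ := hρ
  have hca := c_mem ha
  have hcb := c_mem hb
  have hne : c p j ρ ≠ c p j π := by
    intro e; rw [e] at hlt; exact lt_irrefl _ hlt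
  have e1 := T_ne p j π (c p j ρ) (D_ne hcb) hne
  have h2 : T p j π (c p j ρ) < T p j π j := by
    rw [h, T_c, T_j]; exact (mem_D.1 hcb).2
  rw [T_c, e1] at hlt
  have hm : c p j ρ ∈ D p j π := mem_D.2 ⟨(mem_D.1 hcb).1, hlt⟩
  have := c_le hm
  rw [e1, T_j] at h2
  exact absurd this (not_le.2 h2)

lemma T_inj {n : ℕ} (p : Fin n → ℝ) (j : Fin n) (π ρ : Equiv.Perm (Fin n))
    (hπ : (D p j π).Nonempty) (hρ : (D p j ρ).Nonempty) (h : T p j π = T p j ρ) : π = ρ := by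
  have h1 := T_inj_aux p j π ρ hπ hρ h
  have h2 := T_inj_aux p j ρ π hρ hπ h.symm
  rw [← h] at h2
  have e : c p j π = c p j ρ := (T p j π).injective (le_antisymm (not_lt.1 h2) (not_lt.1 h1))
  unfold T at h
  rw [e] at h
  exact mul_right_cancel h

lemma card_D {n : ℕ} (p : Fin n → ℝ) (j : Fin n) (π : Equiv.Perm (Fin n)) :
    (D p j π).card ≤ (D p j (T p j π)).card + 1 := by
  have hs : (D p j π).erase (c p j π) ⊆ D p j (T p j π) := by
    intro i hi
    obtain ⟨hne, hi⟩ := Finset.mem_erase.1 hi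
    refine mem_D.2 ⟨(mem_D.1 hi).1, ?_⟩
    rw [T_j, T_ne p j π i (D_ne hi) hne]
    exact lt_of_le_of_ne (c_le hi) fun e => hne (π.injective e).symm
  have := Finset.card_le_card hs
  have := Finset.pred_card_le_card_erase (s := D p j π) (a := c p j π)
  omega

/-- Pairing involution. -/
noncomputable def Phi {n : ℕ} (p : Fin n → ℝ) (j : Fin n)
    (x : (_ : Equiv.Perm (Fin n)) × Fin n) : (_ : Equiv.Perm (Fin n)) × Fin n :=
  ⟨x.1 * Equiv.swap x.2 (c p j x.1), c p j x.1⟩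

lemma swap_facts {n : ℕ} {p : Fin n → ℝ} {j i : Fin n} {π : Equiv.Perm (Fin n)}
    (h : i ∈ D p j π) :
    c p j π ∈ D p j (π * Equiv.swap i (c p j π)) ∧
      c p j (π * Equiv.swap i (c p j π)) = i := by
  have hc := c_mem h
  have hle := c_le h
  have hj : (π * Equiv.swap i (c p j π)) j = π j := by
    simp [Equiv.swap_apply_of_ne_of_ne (D_ne h).symm (D_ne hc).symm]
  have hi : (π * Equiv.swap i (c p j π)) i = π (c p j π) := by simp
  have hcc : (π * Equiv.swap i (c p j π)) (c p j π) = π i := by simp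
  refine ⟨mem_D.2 ⟨(mem_D.1 hc).1, ?_⟩, c_uniq (mem_D.2 ⟨(mem_D.1 h).1, ?_⟩) ?_⟩
  · rw [hj, hcc]; exact (mem_D.1 h).2
  · rw [hj, hi]; exact (mem_D.1 hc).2
  · intro k hk
    rw [hi]
    by_cases k1 : k = i
    · rw [k1, hi]
    by_cases k2 : k = c p j π
    · rw [k2, hcc]; exact hle
    have hkk : (π * Equiv.swap i (c p j π)) k = π k := by
      simp [Equiv.swap_apply_of_ne_of_ne k1 k2]
    rw [hkk]
    refine c_le (mem_D.2 ⟨(mem_D.1 hk).1, ?_⟩)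
    have := (mem_D.1 hk).2
    rwa [hj, hkk] at this

lemma pair_le {n : ℕ} (p : Fin n → ℝ) (hpos : ∀ i, 0 < p i) {j i : Fin n}
    {π : Equiv.Perm (Fin n)} (h : i ∈ D p j π) :
    w p π * p i + w p (π * Equiv.swap i (c p j π)) * p (c p j π) ≤
      p j * w p (T p j π) + p j * w p (T p j (π * Equiv.swap i (c p j π))) := by
  have hc := c_mem h
  have hle := c_le h
  obtain ⟨-, hc2⟩ := swap_facts h
  have hcj := D_ne hc
  have hij := D_ne h
  have hjc' := (mem_D.1 hc).2
  have hpc := (mem_D.1 hc).1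
  have hpi := (mem_D.1 h).1
  by_cases e : i = c p j π
  · rw [← e] at hjc' ⊢
    simp only [Equiv.swap_self]
    have er : π * Equiv.refl (Fin n) = π := rfl
    rw [er]
    obtain ⟨R, hR, hw⟩ := w2 p hpos π j i hij.symm
    have w1 := hw π (fun _ _ _ => rfl)
    have w2' := hw (T p j π) (fun t h1 h2 => T_ne p j π t h1 (by rwa [← e]))
    have t1 := T_j p j π
    have t2 := T_c p j π
    rw [← e] at t1 t2
    rw [t1, t2] at w2'
    have k := key2 (p j) (p i) (hpos j) hpi.le (n - 1 - (π j : ℕ)) (n - 1 - (π i : ℕ))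
      (by have := (π i).isLt; have : (π j : ℕ) < π i := hjc'; omega)
    have k' := mul_le_mul_of_nonneg_left k hR
    rw [w1, w2']
    linarith
  · have hlt : π (c p j π) < π i := lt_of_le_of_ne hle fun q => e (π.injective q).symm
    set d := c p j π with hd
    obtain ⟨R, hR, hw⟩ := w3 p hpos π j d i hcj.symm hij.symm (Ne.symm e)
    set π2 := π * Equiv.swap i d with hπ2
    have s1 : π2 j = π j := by
      simp [hπ2, Equiv.swap_apply_of_ne_of_ne hij.symm hcj.symm]
    have s2 : π2 i = π d := by simp [hπ2]
    have s3 : π2 d = π i := by simp [hπ2]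
    have s4 : ∀ t, t ≠ d → t ≠ i → π2 t = π t := fun t h1 h2 => by
      simp [hπ2, Equiv.swap_apply_of_ne_of_ne h2 h1]
    have a1 := hw π (fun _ _ _ _ => rfl)
    have a2 := hw π2 (fun t _ h2 h3 => s4 t h2 h3)
    have a3 := hw (T p j π) (fun t h1 h2 _ => T_ne p j π t h1 h2)
    have a4 := hw (T p j π2) (fun t h1 h2 h3 => by
      rw [T_ne p j π2 t h1 (by rwa [hc2]), s4 t h2 h3])
    have t1 := T_j p j π
    have t2 := T_c p j π
    have t3 := T_ne p j π i hij e
    have t4 := T_j p j π2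
    have t5 := T_c p j π2
    have t6 := T_ne p j π2 d hcj (by rw [hc2]; exact Ne.symm e)
    rw [← hd] at t1 t2
    rw [hc2] at t4 t5
    rw [s1, s2, s3] at a2
    rw [t1, t2, t3] at a3
    rw [t4, t5, t6, s1, s2, s3] at a4
    have k := key3 (p j) (p d) (p i) (hpos j) hpc.le hpi.le
      (n - 1 - (π j : ℕ)) (n - 1 - (π d : ℕ)) (n - 1 - (π i : ℕ))
      (by have := (π d).isLt; have : (π j : ℕ) < π d := hjc'; omega)
      (by have := (π i).isLt; have : (π d : ℕ) < π i := hlt; omega)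
    have k' := mul_le_mul_of_nonneg_left k hR
    rw [a1, a2, a3, a4]
    calc _ = _ := by ring
      _ ≤ _ := k'
      _ = _ := by ring

lemma sum_pair {n : ℕ} (p : Fin n → ℝ) (hpos : ∀ i, 0 < p i) (j : Fin n) :
    ∑ π, ∑ i ∈ D p j π, w p π * p i ≤ ∑ π, ∑ _i ∈ D p j π, p j * w p (T p j π) := by
  have reidx : ∀ F : (_ : Equiv.Perm (Fin n)) × Fin n → ℝ,
      ∑ x ∈ univ.sigma (D p j), F (Phi p j x) = ∑ x ∈ univ.sigma (D p j), F x := by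
    intro F
    have hmem : ∀ x ∈ univ.sigma (D p j), Phi p j x ∈ univ.sigma (D p j) := by
      intro x hx
      have hx := (Finset.mem_sigma.1 hx).2
      exact Finset.mem_sigma.2 ⟨mem_univ _, (swap_facts hx).1⟩
    have hinv : ∀ x ∈ univ.sigma (D p j), Phi p j (Phi p j x) = x := by
      rintro ⟨π, i⟩ hx
      have hx := (Finset.mem_sigma.1 hx).2
      have h2 := (swap_facts hx).2
      simp only [Phi] at h2 ⊢
      rw [h2, mul_assoc, Equiv.swap_comm (c p j π) i, Equiv.swap_mul_self, mul_one]
    exact Finset.sum_nbij' (Phi p j) (Phi p j) hmem hmem hinv hinv (fun _ _ => rfl)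
  have e1 := reidx (fun x => w p x.1 * p x.2)
  have e2 := reidx (fun x => p j * w p (T p j x.1))
  have hle : ∑ x ∈ univ.sigma (D p j), (w p x.1 * p x.2 +
        w p (Phi p j x).1 * p (Phi p j x).2) ≤
      ∑ x ∈ univ.sigma (D p j), (p j * w p (T p j x.1) + p j * w p (T p j (Phi p j x).1)) :=
    Finset.sum_le_sum fun x hx => pair_le p hpos (Finset.mem_sigma.1 hx).2
  rw [Finset.sum_add_distrib, Finset.sum_add_distrib, e1, e2] at hle
  rw [Finset.sum_sigma, Finset.sum_sigma] at hle
  dsimp only at hle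
  linarith

lemma sum_T {n : ℕ} (p : Fin n → ℝ) (hpos : ∀ i, 0 < p i) (j : Fin n) :
    ∑ π, ((D p j π).card : ℝ) * w p (T p j π) ≤
      ∑ π, ((D p j π).card + 1 : ℝ) * w p π := by
  classical
  set S := (univ : Finset (Equiv.Perm (Fin n))).filter (fun π => (D p j π).Nonempty) with hS
  have h0 : ∑ π, ((D p j π).card : ℝ) * w p (T p j π) =
      ∑ π ∈ S, ((D p j π).card : ℝ) * w p (T p j π) := by
    symm
    refine Finset.sum_subset (Finset.subset_univ _) fun π _ hπ => ?_
    have : D p j π = ∅ := by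
      simpa [hS, Finset.not_nonempty_iff_eq_empty] using hπ
    simp [this]
  rw [h0]
  calc _ ≤ ∑ π ∈ S, ((D p j (T p j π)).card + 1 : ℝ) * w p (T p j π) := by
        refine Finset.sum_le_sum fun π _ => ?_
        refine mul_le_mul_of_nonneg_right ?_ (w_pos p hpos _).le
        exact_mod_cast card_D p j π
    _ = ∑ σ ∈ S.image (T p j), ((D p j σ).card + 1 : ℝ) * w p σ := by
        rw [Finset.sum_image]
        intro π hπ ρ hρ h
        exact T_inj p j π ρ (by simpa [hS] using hπ) (by simpa [hS] using hρ) h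
    _ ≤ _ := by
        refine Finset.sum_le_sum_of_subset_of_nonneg (Finset.subset_univ _) fun σ _ _ => ?_
        have := w_pos p hpos σ
        positivity

lemma main {n : ℕ} (p : Fin n → ℝ) (hpos : ∀ i, 0 < p i) (j : Fin n) :
    ∑ π, w p π * ∑ i ∈ D p j π, (p i - p j) ≤ p j * ∑ π, w p π := by
  have h1 := sum_pair p hpos j
  have h2 := mul_le_mul_of_nonneg_left (sum_T p hpos j) (hpos j).le
  have e1 : ∑ π, ∑ _i ∈ D p j π, p j * w p (T p j π) =
      p j * ∑ π, ((D p j π).card : ℝ) * w p (T p j π) := by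
    rw [Finset.mul_sum]
    refine Finset.sum_congr rfl fun π _ => ?_
    rw [Finset.sum_const, nsmul_eq_mul]; ring
  have e2 : ∑ π, w p π * ∑ i ∈ D p j π, (p i - p j) =
      ∑ π, ∑ i ∈ D p j π, w p π * p i - p j * ∑ π, ((D p j π).card : ℝ) * w p π := by
    rw [Finset.mul_sum, ← Finset.sum_sub_distrib]
    refine Finset.sum_congr rfl fun π _ => ?_
    rw [Finset.sum_sub_distrib, Finset.sum_const, nsmul_eq_mul, mul_sub, Finset.mul_sum]; ring
  have e3 : ∑ π, ((D p j π).card + 1 : ℝ) * w p π =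
      ∑ π, ((D p j π).card : ℝ) * w p π + ∑ π, w p π := by
    rw [← Finset.sum_add_distrib]
    exact Finset.sum_congr rfl fun π _ => by ring
  rw [e3, mul_add] at h2
  rw [e2]
  linarith

end Glad

/-- gladiator chain: for arbitrary positive strengths
`p_1 ≥ … ≥ p_n > 0` (not necessarily summing to 1) and the stationary
distribution `Q(π) ∝ ∏ p_i^{n−π(i)}` of the gladiator chain, for every
gladiator `j` the expected total excess strength of stronger gladiators ranked
below `j` is at most `p_j`.  Larger `π i` means a worse (later) rank. -/
theorem stmt19 (n : ℕ) (hn : 1 ≤ n) (p : Fin n → ℝ)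
    (hpos : ∀ i, 0 < p i) (hmono : ∀ a b : Fin n, a ≤ b → p b ≤ p a)
    (Z : ℝ) (hZ : Z = ∑ σ : Equiv.Perm (Fin n), ∏ i, p i ^ (n - 1 - (σ i : ℕ)))
    (Q : Equiv.Perm (Fin n) → ℝ)
    (hQ : ∀ π : Equiv.Perm (Fin n), Q π = (∏ i, p i ^ (n - 1 - (π i : ℕ))) / Z)
    (j : Fin n) :
    ∑ π : Equiv.Perm (Fin n),
        Q π * ∑ i ∈ Finset.univ.filter (fun i => π j < π i), max (p i - p j) 0
      ≤ p j := by
  have hZ' : Z = ∑ π, Glad.w p π := hZ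
  have hZpos : 0 < Z := by
    rw [hZ']
    exact Finset.sum_pos (fun π _ => Glad.w_pos p hpos π) Finset.univ_nonempty
  have hin : ∀ π : Equiv.Perm (Fin n),
      ∑ i ∈ Finset.univ.filter (fun i => π j < π i), max (p i - p j) 0 =
        ∑ i ∈ Glad.D p j π, (p i - p j) := by
    intro π
    unfold Glad.D
    rw [Finset.sum_filter, Finset.sum_filter]
    refine Finset.sum_congr rfl fun i _ => ?_
    by_cases h1 : π j < π i
    · by_cases h2 : p j < p i
      · simp [h1, h2, h2.le]
      · simp [h1, h2, not_lt.1 h2]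
    · simp [h1]
  have hs : ∑ π : Equiv.Perm (Fin n),
        Q π * ∑ i ∈ Finset.univ.filter (fun i => π j < π i), max (p i - p j) 0 =
      (∑ π, Glad.w p π * ∑ i ∈ Glad.D p j π, (p i - p j)) / Z := by
    rw [Finset.sum_div]
    refine Finset.sum_congr rfl fun π _ => ?_
    rw [hin, hQ, div_mul_eq_mul_div]
    rfl
  rw [hs, div_le_iff₀ hZpos, hZ']
  exact Glad.main p hpos j
end
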